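/- Let T be a tree of order n ≥ 4. If 2·γnt(T) = n, then T belongs to the family 𝒯, i.e., T can be constructed as follows: there exist a tree T0 and a tree T1 obtained from T0 by, for each vertex x of T0, either adding one new vertex joined to x or adding a new path on three vertices and joining its central vertex to x; and T is obtained from T1 by choosing a set L1 of leaves of T1 forming a 2-packing of T1 (possibly empty) and, for each v ∈ L1, adding some number k ≥ 0 (depending on v) of vertex-disjoint new copies of the path P2 and joining v to exactly one end of each added copy. -/

import Mathlib

open SimpleGraph

variable {V : Type*}

/-- The open neighborhood `N(S)` of a set `S` of vertices: all vertices having a neighbor in `S`. -/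
def openNbhd (G : SimpleGraph V) (S : Set V) : Set V := {v | ∃ u ∈ S, G.Adj u v}

/-- `S` is a dominating set: every vertex not in `S` has a neighbor in `S`. -/
def IsDomSet (G : SimpleGraph V) (S : Set V) : Prop := ∀ v ∉ S, ∃ u ∈ S, G.Adj u v

/-- `S` is a total dominating set: every vertex has a neighbor in `S`. -/
def IsTotalDomSet (G : SimpleGraph V) (S : Set V) : Prop := ∀ v, ∃ u ∈ S, G.Adj u v

/-- `S` is a neighborhood total dominating set: a dominating set such that the subgraph
induced by the open neighborhood `N(S)` has no isolated vertex. -/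
def IsNTDSet (G : SimpleGraph V) (S : Set V) : Prop :=
  IsDomSet G S ∧ ∀ v ∈ openNbhd G S, ∃ u ∈ openNbhd G S, G.Adj v u

/-- The domination number `γ(G)`. -/
noncomputable def domNum (G : SimpleGraph V) : ℕ :=
  sInf {n | ∃ S : Set V, IsDomSet G S ∧ S.ncard = n}

/-- The total domination number `γt(G)`. -/
noncomputable def totalDomNum (G : SimpleGraph V) : ℕ :=
  sInf {n | ∃ S : Set V, IsTotalDomSet G S ∧ S.ncard = n}

/-- The neighborhood total domination number `γnt(G)`. -/
noncomputable def ntdNum (G : SimpleGraph V) : ℕ :=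
  sInf {n | ∃ S : Set V, IsNTDSet G S ∧ S.ncard = n}

section FamilyT

variable {α : Type*}

/-- A vertex is a leaf if it has exactly one neighbor. -/
def IsLeafVertex (G : SimpleGraph V) (v : V) : Prop := ∃! u, G.Adj v u

/-- The new vertices added to a vertex `x` of `T0` when forming the base tree `T1`:
if `unit x = false` (a `P2`-unit), a single new vertex `(x, 0)` is added and joined to `x`;
if `unit x = true` (a star-unit), a new path on the three vertices `(x, 1), (x, 0), (x, 2)`,
with central vertex `(x, 0)`, is added and `(x, 0)` is joined to `x`. -/
def UnitVerts (unit : α → Bool) : Type _ :=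
  {p : α × Fin 3 // unit p.1 = true ∨ p.2 = 0}

/-- The vertex type of the base tree `T1`. -/
abbrev BaseVerts (unit : α → Bool) : Type _ := α ⊕ UnitVerts unit

/-- The base tree `T1` obtained from the tree `T0` by, for each vertex `x` of `T0`, either
adding one new vertex joined to `x` (when `unit x = false`) or adding a new path on three
vertices and joining its central vertex to `x` (when `unit x = true`). -/
def baseTree (T0 : SimpleGraph α) (unit : α → Bool) : SimpleGraph (BaseVerts unit) :=
  SimpleGraph.fromRel (fun a b =>
    (∃ x y : α, a = Sum.inl x ∧ b = Sum.inl y ∧ T0.Adj x y) ∨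
    (∃ (x : α) (u : UnitVerts unit),
        a = Sum.inl x ∧ b = Sum.inr u ∧ u.1.1 = x ∧ u.1.2 = 0) ∨
    (∃ u w : UnitVerts unit,
        a = Sum.inr u ∧ b = Sum.inr w ∧ u.1.1 = w.1.1 ∧ u.1.2 = 0 ∧ w.1.2 ≠ 0))

/-- The vertices of the appended copies of `P2`: for each vertex `v` of `T1` and each
`i < k v`, a new copy of `P2` consisting of the vertex `(v, i, 0)` (which is joined to `v`)
and the vertex `(v, i, 1)`. -/
def AppendVerts (unit : α → Bool) (k : BaseVerts unit → ℕ) : Type _ :=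
  {t : BaseVerts unit × ℕ × Fin 2 // t.2.1 < k t.1}

/-- The vertex type of the final tree. -/
abbrev FullVerts (unit : α → Bool) (k : BaseVerts unit → ℕ) : Type _ :=
  BaseVerts unit ⊕ AppendVerts unit k

/-- The tree obtained from the base tree `T1 = baseTree T0 unit` by appending, for each
vertex `v` of `T1`, `k v` vertex-disjoint new copies of `P2`, joining `v` to exactly one end
of each copy. -/
def fullTree (T0 : SimpleGraph α) (unit : α → Bool) (k : BaseVerts unit → ℕ) :
    SimpleGraph (FullVerts unit k) :=
  SimpleGraph.fromRel (fun a b =>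
    (∃ v w : BaseVerts unit, a = Sum.inl v ∧ b = Sum.inl w ∧ (baseTree T0 unit).Adj v w) ∨
    (∃ (v : BaseVerts unit) (t : AppendVerts unit k),
        a = Sum.inl v ∧ b = Sum.inr t ∧ t.1.1 = v ∧ t.1.2.2 = 0) ∨
    (∃ t s : AppendVerts unit k, a = Sum.inr t ∧ b = Sum.inr s ∧ t.1.1 = s.1.1 ∧
        t.1.2.1 = s.1.2.1 ∧ t.1.2.2 = 0 ∧ s.1.2.2 = 1))

end FamilyT

/-! Let `n` be the order of `T`. As `n` is even, `T` has a spanning subgraph `F` all of whose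
degrees are odd. In a component of the forest `F` with more than two vertices, the non-leaves, with
one leaf if there is only one non-leaf, are a neighborhood total dominating set of at most half of
the vertices; a component `P2` next to vertices treated before needs only one vertex. Hence any
partial solution on a connected union of components of `F` extends to all of `T`, adding one
component at a time, and as `2 γnt(T) = n`, no partial solution has fewer than half of the
vertices. This forces the components of `F` to be `P2` or `K_{1,3}`, where the center of `K_{1,3}`
and one of its leaves have no neighbors outside. Call a vertex a hub if it forms a component `P2`
of `F` with a leaf of `T` and has exactly one neighbor outside: a hub and its leaf will be an
appended copy of `P2`. If two vertices of a component had outer neighbors that are not hubs, the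
components of these neighbors could help to dominate it, with a partial solution that is too small
as a result. So we may choose a root in each component such that all other vertices have only hubs
as outer neighbors, and the roots of the components that are not appended copies induce `T0`. -/

namespace NTDTree

open scoped symmDiff

/-! ### Spanning subgraphs with odd degrees -/

theorem odd_ncard_symmDiff_singleton [Finite V] (s : Set V) (a : V) :
    Odd (s ∆ {a}).ncard ↔ ¬ Odd s.ncard := by
  by_cases ha : a ∈ s
  · have hdiff : s ∆ {a} = s \ {a} := by
      ext x
      rw [Set.mem_symmDiff, Set.mem_sdiff, Set.mem_singleton_iff]
      grind
    rw [hdiff, ← Set.ncard_sdiff_singleton_add_one ha, Nat.odd_add_one, not_not]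
  · have hinsert : s ∆ {a} = insert a s := by
      ext x
      rw [Set.mem_symmDiff, Set.mem_insert_iff, Set.mem_singleton_iff]
      grind
    rw [hinsert, Set.ncard_insert_of_notMem ha, Nat.odd_add_one]

theorem odd_ncard_neighborSet_symmDiff_edge [Finite V] (F : SimpleGraph V) {a b : V}
    (hab : a ≠ b) (v : V) :
    Odd ((F ∆ edge a b).neighborSet v).ncard ↔
      Xor (Odd (F.neighborSet v).ncard) (Xor (v = a) (v = b)) := by
  have hnbr : ∀ w, (F ∆ edge a b).Adj v w ↔
      Xor (F.Adj v w) ((v = a ∧ w = b) ∨ (v = b ∧ w = a)) := fun w => by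
    simp only [symmDiff_def, sup_adj, sdiff_adj, edge_adj, xor_def]
    grind
  have htoggle : ∀ c, (∀ w, (v = a ∧ w = b) ∨ (v = b ∧ w = a) ↔ w = c) →
      (F ∆ edge a b).neighborSet v = F.neighborSet v ∆ {c} := fun c hc => by
    ext w
    rw [mem_neighborSet, hnbr, hc, Set.mem_symmDiff, mem_neighborSet, Set.mem_singleton_iff,
      xor_def]
  by_cases hva : v = a
  · rw [htoggle b (by grind), odd_ncard_symmDiff_singleton]
    grind
  by_cases hvb : v = b
  · rw [htoggle a (by grind), odd_ncard_symmDiff_singleton]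
    grind
  have hsame : (F ∆ edge a b).neighborSet v = F.neighborSet v := by
    ext w
    rw [mem_neighborSet, hnbr]
    grind [mem_neighborSet]
  rw [hsame]
  grind

theorem exists_le_odd_ncard_neighborSet_iff_xor [Finite V] {T : SimpleGraph V} {a b : V}
    (p : T.Walk a b) : ∀ F ≤ T, ∃ F' ≤ T, ∀ v, Odd (F'.neighborSet v).ncard ↔
      Xor (Odd (F.neighborSet v).ncard) (Xor (v = a) (v = b)) := by
  induction p with
  | nil => exact fun F hF => ⟨F, hF, fun v => by grind⟩
  | @cons a c b hac _ ih =>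
    intro F hF
    have hle : F ∆ edge a c ≤ T :=
      symmDiff_le_sup.trans (sup_le hF ((edge_le_iff T).2 (.inr hac)))
    obtain ⟨F', hF', hodd⟩ := ih _ hle
    refine ⟨F', hF', fun v => ?_⟩
    rw [hodd, odd_ncard_neighborSet_symmDiff_edge F hac.ne]
    grind

theorem exists_le_odd_ncard_neighborSet_iff_mem [Finite V] {T : SimpleGraph V} (hT : T.Connected)
    (r : V) (A : Set V) :
    ∃ F ≤ T, ∀ v, v ≠ r → (Odd (F.neighborSet v).ncard ↔ v ∈ A) := by
  induction A, A.toFinite using Set.Finite.induction_on with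
  | empty => exact ⟨⊥, bot_le, fun v _ => by simp [neighborSet]⟩
  | @insert a A ha _ ih =>
    obtain ⟨F, hF, hodd⟩ := ih
    obtain ⟨F', hF', hodd'⟩ :=
      exists_le_odd_ncard_neighborSet_iff_xor (hT.preconnected a r).some F hF
    exact ⟨F', hF', fun v hv => by grind⟩

theorem ncard_neighborSet_eq_degree (G : SimpleGraph V) (v : V) [Fintype (G.neighborSet v)] :
    (G.neighborSet v).ncard = G.degree v := by
  rw [Set.ncard_eq_toFinset_card', Set.toFinset_card, card_neighborSet_eq_degree]

theorem even_ncard_odd_ncard_neighborSet [Finite V] (F : SimpleGraph V) :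
    Even {v | Odd (F.neighborSet v).ncard}.ncard := by
  classical
  have := Fintype.ofFinite V
  simp only [ncard_neighborSet_eq_degree]
  rw [Set.ncard_eq_toFinset_card', Set.toFinset_ofPred]
  exact F.even_card_odd_degree_vertices

theorem exists_le_forall_odd_ncard_neighborSet [Finite V] {T : SimpleGraph V}
    (hT : T.Connected) (hV : Even (Nat.card V)) :
    ∃ F ≤ T, ∀ v, Odd (F.neighborSet v).ncard := by
  obtain ⟨r⟩ := hT.nonempty
  obtain ⟨F, hF, hodd⟩ := exists_le_odd_ncard_neighborSet_iff_mem hT r Set.univ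
  refine ⟨F, hF, fun v => ?_⟩
  by_contra hv
  obtain rfl : v = r := by
    by_contra hne
    exact hv ((hodd v hne).2 trivial)
  have hcompl : {w | Odd (F.neighborSet w).ncard} = {v}ᶜ := by
    ext w
    by_cases hw : w = v <;> simp_all
  have heven := even_ncard_odd_ncard_neighborSet F
  have hcard := Set.ncard_add_ncard_compl {v}
  rw [hcompl] at heven
  rw [Set.ncard_singleton] at hcard
  grind

theorem isLeafVertex_iff_ncard {G : SimpleGraph V} {v : V} :
    IsLeafVertex G v ↔ (G.neighborSet v).ncard = 1 := by
  rw [Set.ncard_eq_one, IsLeafVertex]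
  simp only [Set.ext_iff, mem_neighborSet, Set.mem_singleton_iff]
  exact ⟨fun ⟨a, ha, h⟩ => ⟨a, fun b => ⟨h b, fun hb => hb ▸ ha⟩⟩,
    fun ⟨a, ha⟩ => ⟨a, (ha a).2 rfl, fun b hb => (ha b).1 hb⟩⟩

theorem ncard_neighborSet_toSimpleGraph {F : SimpleGraph V} (c : F.ConnectedComponent)
    (v : c) : (c.toSimpleGraph.neighborSet v).ncard = (F.neighborSet v).ncard := by
  rw [← Set.ncard_image_of_injective _ Subtype.val_injective]
  congr 1
  ext w
  simp only [Set.mem_image, mem_neighborSet]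
  refine ⟨?_, fun hw => ⟨⟨w, c.mem_supp_of_adj_mem_supp v.2 hw⟩, hw, rfl⟩⟩
  rintro ⟨u, hu, rfl⟩
  exact hu

theorem sum_ncard_neighborSet_add_two [Fintype V] {G : SimpleGraph V} (hG : G.IsTree) :
    ∑ v, (G.neighborSet v).ncard + 2 = 2 * Fintype.card V := by
  classical
  simp only [ncard_neighborSet_eq_degree, sum_degrees_eq_twice_card_edges, ← hG.card_edgeFinset]
  ring

theorem two_mul_ncard_not_isLeafVertex_add_two_le [Finite V] {F : SimpleGraph V}
    (hF : F.IsAcyclic) (hodd : ∀ v, Odd (F.neighborSet v).ncard) (c : F.ConnectedComponent) :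
    2 * {v ∈ c.supp | ¬ IsLeafVertex F v}.ncard + 2 ≤ c.supp.ncard := by
  classical
  have := Fintype.ofFinite c
  have hsum := sum_ncard_neighborSet_add_two (hF.isTree_connectedComponent c)
  simp only [ncard_neighborSet_toSimpleGraph] at hsum
  have hdeg : ∀ v : c, 1 + 2 * (if ¬ IsLeafVertex F v then 1 else 0) ≤ (F.neighborSet v).ncard := by
    intro v
    have := hodd v
    rw [isLeafVertex_iff_ncard]
    grind
  have hinternal : {v ∈ c.supp | ¬ IsLeafVertex F v}.ncard =
      ∑ v : c, if ¬ IsLeafVertex F v then 1 else 0 := by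
    have himage : {v ∈ c.supp | ¬ IsLeafVertex F v} =
        Subtype.val '' {v : c | ¬ IsLeafVertex F v} := by
      ext v
      exact ⟨fun ⟨hv, hleaf⟩ => ⟨⟨v, hv⟩, hleaf, rfl⟩,
        fun ⟨w, hleaf, hw⟩ => hw ▸ ⟨w.2, hleaf⟩⟩
    rw [himage, Set.ncard_image_of_injective _ Subtype.val_injective, Set.ncard_eq_toFinset_card',
      Set.toFinset_ofPred, Finset.card_filter]
  have hle := Finset.sum_le_sum fun v (_ : v ∈ Finset.univ) => hdeg v
  have hcard : Fintype.card c = c.supp.ncard := by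
    rw [← Nat.card_eq_fintype_card]; rfl
  rw [Finset.sum_add_distrib, ← Finset.mul_sum, Finset.sum_const, Finset.card_univ] at hle
  simp only [smul_eq_mul] at hle
  omega

/-! ### Partial dominating sets on unions of components -/

/-- The neighborhood-total-domination condition at `v`, relative to a set `U` beyond which `S` may
still be extended: `v` lies in `S`, or it is dominated by `S` and has a neighbor which lies in
`N(S)`, or lies outside `U`, or lies in `S` and has a neighbor outside `U`. The last two kinds of
neighbor belong to the open neighborhood of the extensions of `S` considered here. -/
def PartialNTDAt (T : SimpleGraph V) (U S : Set V) (v : V) : Prop :=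
  v ∈ S ∨ v ∈ openNbhd T S ∧
    ∃ u, T.Adj v u ∧ (u ∈ openNbhd T S ∨ u ∉ U ∨ u ∈ S ∧ ∃ z, T.Adj u z ∧ z ∉ U)

theorem openNbhd_mono {G : SimpleGraph V} {S S' : Set V} (h : S ⊆ S') :
    openNbhd G S ⊆ openNbhd G S' :=
  fun _ ⟨u, hu, huv⟩ => ⟨u, h hu, huv⟩

theorem PartialNTDAt.mono {T : SimpleGraph V} {U S S' : Set V} {v : V}
    (h : PartialNTDAt T U S v) (hS : S ⊆ S') : PartialNTDAt T U S' v := by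
  rcases h with hv | ⟨hv, u, hvu, hu⟩
  · exact .inl (hS hv)
  · exact .inr ⟨openNbhd_mono hS hv, u, hvu,
      hu.imp (fun h => openNbhd_mono hS h) (Or.imp_right (And.imp_left fun h => hS h))⟩

theorem isNTDSet_of_forall_partialNTDAt {T : SimpleGraph V} {S : Set V}
    (h : ∀ v, PartialNTDAt T Set.univ S v) : IsNTDSet T S := by
  refine ⟨fun v hv => ((h v).resolve_left hv).1, fun v ⟨s, _, hsv⟩ => ?_⟩
  rcases h v with hv | ⟨-, u, hvu, hu | hu | ⟨-, z, -, hz⟩⟩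
  · exact ⟨s, ⟨v, hv, hsv.symm⟩, hsv.symm⟩
  · exact ⟨u, hu, hvu⟩
  · exact absurd trivial hu
  · exact absurd trivial hz

theorem mem_of_reachable_of_adj_closed {F : SimpleGraph V} {A : Set V}
    (hA : ∀ u ∈ A, ∀ v, F.Adj u v → v ∈ A) {z v : V} (hz : z ∈ A) (hzv : F.Reachable z v) :
    v ∈ A := by
  by_contra hv
  obtain ⟨d, -, hfst, hsnd⟩ := hzv.some.exists_boundary_dart A hz hv
  exact hsnd (hA _ hfst _ d.adj)

theorem not_isLeafVertex_of_adj_of_adj {F : SimpleGraph V} {v a b : V} (ha : F.Adj v a)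
    (hb : F.Adj v b) (hab : a ≠ b) : ¬ IsLeafVertex F v :=
  fun hv => hab (hv.unique ha hb)

theorem exists_adj_eq_or_not_isLeafVertex {F : SimpleGraph V} {v z : V} (h : F.Reachable v z)
    (hne : v ≠ z) : ∃ s, F.Adj v s ∧ (s = z ∨ ¬ IsLeafVertex F s) := by
  obtain ⟨p, hp⟩ := h.exists_isPath
  cases p with
  | nil => exact absurd rfl hne
  | @cons _ s _ hvs q =>
    refine ⟨s, hvs, ?_⟩
    cases q with
    | nil => exact .inl rfl
    | @cons _ t _ hst q =>
      rw [Walk.cons_isPath_iff, Walk.support_cons, List.mem_cons, not_or] at hp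
      exact .inr (not_isLeafVertex_of_adj_of_adj hvs.symm hst
        fun hvt => hp.2.2 (hvt ▸ q.start_mem_support))

/-- The non-leaves of the component of `F` containing `z`, together with `z` and `z'`. When `z'` is
a neighbor of `z` this is a neighborhood total dominating set of the component. -/
def core (F : SimpleGraph V) (z z' : V) : Set V :=
  {v ∈ (F.connectedComponentMk z).supp | ¬ IsLeafVertex F v} ∪ {z, z'}

section core

variable {F : SimpleGraph V} {z z' : V}

theorem core_subset_supp (h : F.Adj z z') : core F z z' ⊆ (F.connectedComponentMk z).supp := by
  rintro v (hv | rfl | rfl)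
  · exact hv.1
  · exact ConnectedComponent.connectedComponentMk_mem
  · exact (ConnectedComponent.connectedComponentMk_eq_of_adj h).symm

theorem partialNTDAt_core {T : SimpleGraph V} (hFT : F ≤ T) (h : F.Adj z z') (U : Set V) {v : V}
    (hv : v ∈ (F.connectedComponentMk z).supp) : PartialNTDAt T U (core F z z') v := by
  have exists_adj_core : ∀ x ∈ (F.connectedComponentMk z).supp, x ≠ z →
      ∃ s ∈ core F z z', F.Adj x s := fun x hx hxz => by
    obtain ⟨s, hxs, hs⟩ :=
      exists_adj_eq_or_not_isLeafVertex (ConnectedComponent.exact hx) hxz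
    refine ⟨s, ?_, hxs⟩
    rcases hs with rfl | hs
    · exact .inr (.inl rfl)
    · exact .inl ⟨ConnectedComponent.mem_supp_of_adj_mem_supp _ hx hxs, hs⟩
  by_cases hvz : v = z
  · exact .inl (.inr (.inl hvz))
  obtain ⟨s, hs, hvs⟩ := exists_adj_core v hv hvz
  refine .inr ⟨⟨s, hs, hFT hvs.symm⟩, s, hFT hvs, .inl ?_⟩
  by_cases hsz : s = z
  · exact ⟨z', .inr (.inr rfl), hsz ▸ hFT h.symm⟩
  · obtain ⟨t, ht, hst⟩ := exists_adj_core s (core_subset_supp h hs) hsz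
    exact ⟨t, ht, hFT hst.symm⟩

variable [Finite V]

theorem two_mul_ncard_core_le (hF : F.IsAcyclic) (hodd : ∀ v, Odd (F.neighborSet v).ncard)
    (h : F.Adj z z') (hpair : ¬ (IsLeafVertex F z ∧ IsLeafVertex F z')) :
    2 * (core F z z').ncard ≤ (F.connectedComponentMk z).supp.ncard := by
  have hcount := two_mul_ncard_not_isLeafVertex_add_two_le hF hodd (F.connectedComponentMk z)
  have hz' : z' ∈ (F.connectedComponentMk z).supp := core_subset_supp h (.inr (.inr rfl))
  obtain ⟨x, hx⟩ : ∃ x, core F z z' ⊆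
      insert x {v ∈ (F.connectedComponentMk z).supp | ¬ IsLeafVertex F v} := by
    by_cases hz : IsLeafVertex F z
    · refine ⟨z, Set.union_subset (Set.subset_insert _ _) ?_⟩
      rintro v (rfl | rfl)
      exacts [.inl rfl, .inr ⟨hz', fun h => hpair ⟨hz, h⟩⟩]
    · refine ⟨z', Set.union_subset (Set.subset_insert _ _) ?_⟩
      rintro v (rfl | rfl)
      exacts [.inr ⟨rfl, hz⟩, .inl rfl]
  have hcard := (Set.ncard_le_ncard hx).trans (Set.ncard_insert_le _ _)
  omega

theorem two_mul_ncard_core_add_two_le (hF : F.IsAcyclic)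
    (hodd : ∀ v, Odd (F.neighborSet v).ncard) (h : F.Adj z z') (hz : ¬ IsLeafVertex F z)
    (hz' : ¬ IsLeafVertex F z') :
    2 * (core F z z').ncard + 2 ≤ (F.connectedComponentMk z).supp.ncard := by
  have hcore : core F z z' = {v ∈ (F.connectedComponentMk z).supp | ¬ IsLeafVertex F v} := by
    refine Set.union_eq_left.2 ?_
    rintro v (rfl | rfl)
    exacts [⟨rfl, hz⟩, ⟨core_subset_supp h (.inr (.inr rfl)), hz'⟩]
  rw [hcore]
  exact two_mul_ncard_not_isLeafVertex_add_two_le hF hodd _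

end core

theorem supp_eq_pair_of_isLeafVertex {F : SimpleGraph V} {z t : V} (hzt : F.Adj z t)
    (hz : IsLeafVertex F z) (ht : IsLeafVertex F t) :
    (F.connectedComponentMk z).supp = {z, t} := by
  refine Set.Subset.antisymm (fun v hv => ?_) ?_
  · refine mem_of_reachable_of_adj_closed ?_ (.inl rfl) (ConnectedComponent.exact hv).symm
    rintro u (rfl | rfl) w huw
    exacts [.inr (hz.unique huw hzt), .inl (ht.unique huw hzt.symm)]
  · rintro v (rfl | rfl)
    exacts [rfl, (ConnectedComponent.connectedComponentMk_eq_of_adj hzt).symm]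

theorem exists_adj_of_odd {F : SimpleGraph V} (hodd : ∀ v, Odd (F.neighborSet v).ncard) (v : V) :
    ∃ u, F.Adj v u :=
  Set.nonempty_of_ncard_ne_zero (hodd v).pos.ne'

theorem exists_extend_component [Finite V] {T F : SimpleGraph V} (hF : F.IsAcyclic) (hFT : F ≤ T)
    (hodd : ∀ v, Odd (F.neighborSet v).ncard) {U S : Set V} {w z : V} (hwz : T.Adj w z)
    (hw : w ∈ S ∨ w ∈ openNbhd T S) :
    ∃ S' ⊆ (F.connectedComponentMk z).supp,
      2 * S'.ncard ≤ (F.connectedComponentMk z).supp.ncard ∧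
      (∀ v ∈ (F.connectedComponentMk z).supp, PartialNTDAt T U (S ∪ S') v) ∧
      (w ∈ S → w ∈ openNbhd T S') ∧ (w ∉ S → z ∈ openNbhd T S') := by
  obtain ⟨t, hzt⟩ := exists_adj_of_odd hodd z
  by_cases hpair : IsLeafVertex F z ∧ IsLeafVertex F t
  · rw [supp_eq_pair_of_isLeafVertex hzt hpair.1 hpair.2, Set.ncard_pair hzt.ne]
    by_cases hwS : w ∈ S
    · have hwz' : w ∈ openNbhd T {z} := ⟨z, rfl, hwz.symm⟩
      refine ⟨{z}, by simp, by simp, ?_, fun _ => hwz', fun h => absurd hwS h⟩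
      rintro v (rfl | rfl)
      · exact .inl (.inr rfl)
      · exact .inr ⟨⟨z, .inr rfl, hFT hzt⟩, z, hFT hzt.symm, .inl ⟨w, .inl hwS, hwz⟩⟩
    · have hzt' : z ∈ openNbhd T {t} := ⟨t, rfl, hFT hzt.symm⟩
      refine ⟨{t}, by simp, by simp, ?_, fun h => absurd h hwS, fun _ => hzt'⟩
      rintro v (rfl | rfl)
      · exact .inr ⟨openNbhd_mono Set.subset_union_right hzt', w, hwz.symm,
          .inl (openNbhd_mono Set.subset_union_left (hw.resolve_left hwS))⟩
      · exact .inl (.inr rfl)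
  · exact ⟨core F z t, core_subset_supp hzt, two_mul_ncard_core_le hF hodd hzt hpair,
      fun v hv => (partialNTDAt_core hFT hzt U hv).mono Set.subset_union_right,
      fun _ => ⟨z, .inr (.inl rfl), hwz.symm⟩, fun _ => ⟨t, .inr (.inr rfl), hFT hzt.symm⟩⟩

theorem preconnected_induce_supp {T F : SimpleGraph V} (hFT : F ≤ T) (c : F.ConnectedComponent) :
    (T.induce c.supp).Preconnected :=
  (c.connected_toSimpleGraph.preconnected).mono fun _ _ h => hFT h

theorem reachable_deleteEdges_of_preconnected_induce {T : SimpleGraph V} {A : Set V}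
    (hA : (T.induce A).Preconnected) {e : Sym2 V} {y : V} (hy : y ∈ e) (hyA : y ∉ A) {a a' : V}
    (ha : a ∈ A) (ha' : a' ∈ A) : (T.deleteEdges {e}).Reachable a a' := by
  let f : T.induce A →g T.deleteEdges {e} :=
    ⟨Subtype.val, fun {x x'} h => deleteEdges_adj.2 ⟨h, by
      rintro rfl
      rcases Sym2.mem_iff.1 hy with rfl | rfl
      exacts [hyA x.2, hyA x'.2]⟩⟩
  exact (hA ⟨a, ha⟩ ⟨a', ha'⟩).map f

theorem eq_and_eq_of_adj_of_preconnected_induce {T : SimpleGraph V} (hT : T.IsAcyclic)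
    {A B : Set V} (hA : (T.induce A).Preconnected) (hB : (T.induce B).Preconnected)
    (hAB : Disjoint A B) {a a' b b' : V} (ha : a ∈ A) (ha' : a' ∈ A) (hb : b ∈ B) (hb' : b' ∈ B)
    (hab : T.Adj a b) (hab' : T.Adj a' b') : a = a' ∧ b = b' := by
  by_contra hne
  have hedge : (T.deleteEdges {s(a, b)}).Adj a' b' :=
    deleteEdges_adj.2 ⟨hab', fun h => by
      rcases Sym2.eq_iff.1 h with ⟨rfl, rfl⟩ | ⟨rfl, rfl⟩
      · exact hne ⟨rfl, rfl⟩
      · exact hAB.ne_of_mem ha hb' rfl⟩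
  have hbridge := isAcyclic_iff_forall_adj_isBridge.1 hT hab
  exact (isBridge_iff.1 hbridge)
    (((reachable_deleteEdges_of_preconnected_induce hA (Sym2.mem_mk_right a b)
      (fun h => hAB.ne_of_mem h hb rfl) ha ha').trans hedge.reachable).trans
      (reachable_deleteEdges_of_preconnected_induce hB (Sym2.mem_mk_left a b)
      (fun h => hAB.ne_of_mem ha h rfl) hb' hb))

theorem supp_disjoint_of_notMem {F : SimpleGraph V} {U : Set V}
    (hU : ∀ u ∈ U, ∀ v, F.Adj u v → v ∈ U) {z : V} (hz : z ∉ U) :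
    Disjoint U (F.connectedComponentMk z).supp :=
  Set.disjoint_left.2 fun _ hv hvz =>
    hz (mem_of_reachable_of_adj_closed hU hv (ConnectedComponent.exact hvz))

/-- `S` is a set of vertices of `U` meeting the condition `PartialNTDAt` at all vertices of `U`,
where `U` induces a connected subgraph of `T` and is a union of components of `F`. -/
structure IsPartialNTD (T F : SimpleGraph V) (U S : Set V) : Prop where
  connected : (T.induce U).Connected
  closed : ∀ u ∈ U, ∀ v, F.Adj u v → v ∈ U
  subset : S ⊆ U
  partialNTDAt : ∀ v ∈ U, PartialNTDAt T U S v

theorem IsPartialNTD.extend [Finite V] {T F : SimpleGraph V} (hT : T.IsAcyclic) (hFT : F ≤ T)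
    (hodd : ∀ v, Odd (F.neighborSet v).ncard) {U S : Set V} (h : IsPartialNTD T F U S) {w z : V}
    (hwU : w ∈ U) (hzU : z ∉ U) (hwz : T.Adj w z) :
    ∃ S', IsPartialNTD T F (U ∪ (F.connectedComponentMk z).supp) (S ∪ S') ∧
      2 * S'.ncard ≤ (F.connectedComponentMk z).supp.ncard := by
  obtain ⟨S', hS'K, hcard, hntd, hin, hout⟩ := exists_extend_component (hT.anti hFT) hFT hodd
    (U := U ∪ (F.connectedComponentMk z).supp) hwz ((h.partialNTDAt w hwU).imp_right And.left)
  have hunique : ∀ x ∈ U, ∀ y ∈ (F.connectedComponentMk z).supp, T.Adj x y → w = x ∧ z = y :=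
    fun x hx y hy hxy => eq_and_eq_of_adj_of_preconnected_induce hT h.connected.preconnected
      (preconnected_induce_supp hFT _) (supp_disjoint_of_notMem h.closed hzU) hwU hx rfl hy hwz hxy
  refine ⟨S', ⟨connected_induce_union h.connected.preconnected (preconnected_induce_supp hFT _)
    hwU rfl hwz, ?_, Set.union_subset_union h.subset hS'K, ?_⟩, hcard⟩
  · rintro u (hu | hu) v huv
    · exact .inl (h.closed u hu v huv)
    · exact .inr (ConnectedComponent.mem_supp_of_adj_mem_supp _ hu huv)
  rintro v (hv | hv)
  swap
  · exact hntd v hv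
  rcases h.partialNTDAt v hv with hvS | ⟨hvS, u, hvu, hu⟩
  · exact .inl (.inl hvS)
  by_cases hvS' : v ∈ S
  · exact .inl (.inl hvS')
  refine .inr ⟨openNbhd_mono Set.subset_union_left hvS, u, hvu, ?_⟩
  rcases hu with hu | hu | ⟨hu, x, hux, hx⟩
  · exact .inl (openNbhd_mono Set.subset_union_left hu)
  · by_cases huK : u ∈ (F.connectedComponentMk z).supp
    · obtain ⟨rfl, rfl⟩ := hunique v hv u huK hvu
      exact .inl (openNbhd_mono Set.subset_union_right (hout hvS'))
    · exact .inr (.inl fun h => h.elim hu huK)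
  · by_cases hxK : x ∈ (F.connectedComponentMk z).supp
    · obtain ⟨rfl, rfl⟩ := hunique u (h.subset hu) x hxK hux
      exact .inl (openNbhd_mono Set.subset_union_right (hin hu))
    · exact .inr (.inr ⟨.inl hu, x, hux, fun h => h.elim hx hxK⟩)

theorem IsPartialNTD.exists_isNTDSet [Finite V] {T F : SimpleGraph V} (hT : T.IsTree)
    (hFT : F ≤ T) (hodd : ∀ v, Odd (F.neighborSet v).ncard) {U S : Set V}
    (h : IsPartialNTD T F U S) :
    ∃ S', IsNTDSet T S' ∧ 2 * S'.ncard + U.ncard ≤ 2 * S.ncard + Nat.card V := by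
  induction hn : Uᶜ.ncard using Nat.strong_induction_on generalizing U S with
  | _ n ih =>
  by_cases hU : U = Set.univ
  · subst hU
    refine ⟨S, isNTDSet_of_forall_partialNTDAt fun v => h.partialNTDAt v trivial, ?_⟩
    rw [Set.ncard_univ]
  obtain ⟨z₀, hz₀⟩ := (Set.ne_univ_iff_exists_notMem U).1 hU
  obtain ⟨w₀, hw₀⟩ := h.connected.nonempty
  obtain ⟨⟨⟨w, z⟩, hwz⟩, -, hw, hz⟩ :=
    (hT.connected.preconnected w₀ z₀).some.exists_boundary_dart U hw₀ hz₀
  obtain ⟨S', hext, hcard⟩ := h.extend hT.isAcyclic hFT hodd hw hz hwz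
  have hlt : (U ∪ (F.connectedComponentMk z).supp)ᶜ.ncard < n :=
    hn ▸ Set.ncard_lt_ncard (compl_lt_compl_iff_lt.2
      ⟨Set.subset_union_left, fun hsub => hz (hsub (.inr rfl))⟩)
  obtain ⟨S'', hS'', hle⟩ := ih _ hlt hext rfl
  refine ⟨S'', hS'', ?_⟩
  have hunion := Set.ncard_union_le S S'
  rw [Set.ncard_union_eq (supp_disjoint_of_notMem h.closed hz)] at hle
  omega

/-! ### Components of an extremal pair -/

/-- `T` is a tree none of whose neighborhood total dominating sets has fewer than half of the
vertices, and `F` is a spanning subgraph all of whose degrees are odd. -/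
structure IsExtremalPair (T F : SimpleGraph V) : Prop where
  isTree : T.IsTree
  card_le : ∀ S, IsNTDSet T S → Nat.card V ≤ 2 * S.ncard
  le : F ≤ T
  odd : ∀ v, Odd (F.neighborSet v).ncard

/-- `w` carries a pendant `P2`: in `F` it forms a component `P2` with a leaf of `T`, and it has
exactly one neighbor outside of that component. -/
def IsHub (T F : SimpleGraph V) (w : V) : Prop :=
  IsLeafVertex F w ∧ (∀ t, F.Adj w t → IsLeafVertex T t) ∧
    ∃! v, T.Adj w v ∧ F.connectedComponentMk v ≠ F.connectedComponentMk w

/-- `v` has a neighbor in another component of `F` that is not a hub. -/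
def IsHeavy (T F : SimpleGraph V) (v : V) : Prop :=
  ∃ w, T.Adj v w ∧ F.connectedComponentMk w ≠ F.connectedComponentMk v ∧ ¬ IsHub T F w

theorem disjoint_supp {F : SimpleGraph V} {c c' : F.ConnectedComponent} (hne : c ≠ c') :
    Disjoint c.supp c'.supp :=
  Set.disjoint_left.2 fun _ hv hv' => hne (hv.symm.trans hv')

theorem eq_and_eq_of_adj_of_mem_union {T F : SimpleGraph V} (hT : T.IsAcyclic) (hle : F ≤ T)
    {c : F.ConnectedComponent} {p q p' q' x y : V} (hp : p ∈ c.supp) (hq : q ∈ c.supp)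
    (hpp' : T.Adj p p') (hqq' : T.Adj q q') (hp' : F.connectedComponentMk p' ≠ c)
    (hp'q' : F.connectedComponentMk p' ≠ F.connectedComponentMk q')
    (hx : x ∈ (F.connectedComponentMk p').supp)
    (hy : y ∈ c.supp ∪ (F.connectedComponentMk q').supp) (hyx : T.Adj y x) : p = y ∧ p' = x :=
  eq_and_eq_of_adj_of_preconnected_induce hT
    (connected_induce_union (preconnected_induce_supp hle c) (preconnected_induce_supp hle _)
      hq rfl hqq').preconnected
    (preconnected_induce_supp hle _)
    (Set.disjoint_union_left.2 ⟨(disjoint_supp hp').symm, (disjoint_supp hp'q').symm⟩)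
    (.inl hp) hy rfl hx hpp' hyx

theorem exists_adj_of_not_isHub {T F : SimpleGraph V} {p p' t : V} (hle : F ≤ T)
    (hadj : T.Adj p p')
    (hp : F.connectedComponentMk p ≠ F.connectedComponentMk p') (hhub : ¬ IsHub T F p')
    (hp't : F.Adj p' t) (hleaf : IsLeafVertex F p') (htleaf : IsLeafVertex F t) :
    ∃ w z, (w = p' ∨ w = t) ∧ T.Adj w z ∧ z ∉ ({p', t} : Set V) ∧ (w = p' → z ≠ p) := by
  by_cases ht : IsLeafVertex T t
  · have hunique : ¬ ∃! v, T.Adj p' v ∧ F.connectedComponentMk v ≠ F.connectedComponentMk p' :=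
      fun hv => hhub ⟨hleaf, fun s hs => hleaf.unique hs hp't ▸ ht, hv⟩
    obtain ⟨z, hz, hzp⟩ : ∃ z, (T.Adj p' z ∧
        F.connectedComponentMk z ≠ F.connectedComponentMk p') ∧ z ≠ p := by
      by_contra! hall
      exact hunique ⟨p, ⟨hadj.symm, hp⟩, hall⟩
    rw [← supp_eq_pair_of_isLeafVertex hp't hleaf htleaf]
    exact ⟨p', z, .inl rfl, hz.1, hz.2, fun _ => hzp⟩
  · obtain ⟨z, htz, hz⟩ : ∃ z, T.Adj t z ∧ z ≠ p' := by
      by_contra! hall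
      exact ht ⟨p', hle hp't.symm, hall⟩
    refine ⟨t, z, .inr rfl, htz, ?_, fun h => absurd h hp't.ne'⟩
    rintro (rfl | rfl)
    exacts [hz rfl, htz.ne rfl]

/-- `S` serves the component of `p'` as seen from the neighbor `p` of `p'` in another component: it
meets the condition `PartialNTDAt` there for every `U` that has no further edge to this component,
and it contains `p'`, so that it dominates `p` as well. -/
structure IsSeed (T F : SimpleGraph V) (p p' : V) (S : Set V) : Prop where
  subset : S ⊆ (F.connectedComponentMk p').supp
  mem : p' ∈ S
  card_le : 2 * S.ncard ≤ (F.connectedComponentMk p').supp.ncard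
  partialNTDAt : ∀ U : Set V, (∀ x ∈ (F.connectedComponentMk p').supp, ∀ y ∈ U,
      y ∉ (F.connectedComponentMk p').supp → T.Adj y x → p = y ∧ p' = x) →
    ∀ v ∈ (F.connectedComponentMk p').supp, PartialNTDAt T U S v

theorem IsSeed.isPartialNTD_union {T F : SimpleGraph V} (hT : T.IsAcyclic) (hle : F ≤ T)
    {c : F.ConnectedComponent} {p q p' q' : V} (hp : p ∈ c.supp) (hq : q ∈ c.supp)
    (hpp' : T.Adj p p') (hqq' : T.Adj q q') (hp' : F.connectedComponentMk p' ≠ c)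
    (hq' : F.connectedComponentMk q' ≠ c)
    (hp'q' : F.connectedComponentMk p' ≠ F.connectedComponentMk q') {S P Q : Set V}
    (hP : IsSeed T F p p' P) (hQ : IsSeed T F q q' Q) (hSc : S ⊆ c.supp)
    (hS : ∀ U, ∀ v ∈ c.supp, PartialNTDAt T U (S ∪ {p', q'}) v) :
    IsPartialNTD T F
      (c.supp ∪ (F.connectedComponentMk p').supp ∪ (F.connectedComponentMk q').supp)
      (S ∪ P ∪ Q) := by
  refine ⟨connected_induce_union (connected_induce_union (preconnected_induce_supp hle c)
    (preconnected_induce_supp hle _) hp rfl hpp').preconnected (preconnected_induce_supp hle _)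
    (.inl hq) rfl hqq', ?_,
    Set.union_subset_union (Set.union_subset_union hSc hP.subset) hQ.subset, ?_⟩
  · rintro u ((hu | hu) | hu) v huv
    exacts [.inl (.inl (ConnectedComponent.mem_supp_of_adj_mem_supp _ hu huv)),
      .inl (.inr (ConnectedComponent.mem_supp_of_adj_mem_supp _ hu huv)),
      .inr (ConnectedComponent.mem_supp_of_adj_mem_supp _ hu huv)]
  · rintro v ((hv | hv) | hv)
    · refine (hS _ v hv).mono (Set.union_subset (fun x hx => .inl (.inl hx)) ?_)
      rintro x (rfl | rfl)
      exacts [.inl (.inr hP.mem), .inr hQ.mem]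
    · refine (hP.partialNTDAt _ (fun x hx y hy hyp' hyx => ?_) v hv).mono fun x hx => .inl (.inr hx)
      exact eq_and_eq_of_adj_of_mem_union hT hle hp hq hpp' hqq' hp' hp'q' hx
        (hy.imp_left fun hy => hy.resolve_right hyp') hyx
    · refine (hQ.partialNTDAt _ (fun x hx y hy hyq' hyx => ?_) v hv).mono Set.subset_union_right
      exact eq_and_eq_of_adj_of_mem_union hT hle hq hp hqq' hpp' hq' hp'q'.symm hx
        (hy.resolve_right hyq') hyx

namespace IsExtremalPair

variable {T F : SimpleGraph V}

theorem isAcyclic (h : IsExtremalPair T F) : F.IsAcyclic := h.isTree.isAcyclic.anti h.le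

variable [Finite V]

theorem ncard_le (h : IsExtremalPair T F) {U S : Set V} (hS : IsPartialNTD T F U S) :
    U.ncard ≤ 2 * S.ncard := by
  obtain ⟨S', hS', hle⟩ := hS.exists_isNTDSet h.isTree h.le h.odd
  have := h.card_le S' hS'
  omega

theorem ncard_supp_le (h : IsExtremalPair T F) (c : F.ConnectedComponent) {S : Set V}
    (hSc : S ⊆ c.supp) (hS : ∀ v ∈ c.supp, PartialNTDAt T c.supp S v) :
    c.supp.ncard ≤ 2 * S.ncard :=
  h.ncard_le ⟨(connected_iff _).2 ⟨preconnected_induce_supp h.le c, c.nonempty_supp.to_subtype⟩,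
    fun _ hu _ huv => c.mem_supp_of_adj_mem_supp hu huv, hSc, hS⟩

theorem isLeafVertex_of_adj (h : IsExtremalPair T F) {z z' : V} (hadj : F.Adj z z')
    (hz : ¬ IsLeafVertex F z) : IsLeafVertex F z' := by
  by_contra hz'
  have hle := h.ncard_supp_le _ (core_subset_supp hadj)
    fun v hv => partialNTDAt_core h.le hadj _ hv
  have hcard := two_mul_ncard_core_add_two_le h.isAcyclic h.odd hadj hz hz'
  omega

theorem supp_eq_insert_neighborSet (h : IsExtremalPair T F) {z : V} (hz : ¬ IsLeafVertex F z) :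
    (F.connectedComponentMk z).supp = insert z (F.neighborSet z) := by
  refine Set.Subset.antisymm (fun v hv => ?_) ?_
  · refine mem_of_reachable_of_adj_closed ?_ (.inl rfl) (ConnectedComponent.exact hv).symm
    rintro u (rfl | hzu) w huw
    · exact .inr huw
    · exact .inl ((h.isLeafVertex_of_adj hzu hz).unique huw hzu.symm)
  · rintro v (rfl | hv)
    exacts [rfl, (ConnectedComponent.connectedComponentMk_eq_of_adj hv).symm]

theorem ncard_neighborSet_eq_three (h : IsExtremalPair T F) {z : V} (hz : ¬ IsLeafVertex F z) :
    (F.neighborSet z).ncard = 3 := by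
  obtain ⟨t, hzt⟩ := exists_adj_of_odd h.odd z
  have hpair : core F z t ⊆ {z, t} := by
    refine Set.union_subset (fun v ⟨hv, hvleaf⟩ => ?_) le_rfl
    rw [h.supp_eq_insert_neighborSet hz] at hv
    exact hv.elim .inl fun hzv => absurd (h.isLeafVertex_of_adj hzv hz) hvleaf
  have hle := h.ncard_supp_le _ (core_subset_supp hzt) fun v hv => partialNTDAt_core h.le hzt _ hv
  have hcard := (Set.ncard_le_ncard hpair).trans_eq (Set.ncard_pair hzt.ne)
  rw [h.supp_eq_insert_neighborSet hz,
    Set.ncard_insert_of_notMem F.notMem_neighborSet_self] at hle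
  have hodd := h.odd z
  rw [isLeafVertex_iff_ncard] at hz
  grind

theorem ncard_supp_of_not_isLeafVertex (h : IsExtremalPair T F) {z : V}
    (hz : ¬ IsLeafVertex F z) : (F.connectedComponentMk z).supp.ncard = 4 := by
  rw [h.supp_eq_insert_neighborSet hz, Set.ncard_insert_of_notMem F.notMem_neighborSet_self,
    h.ncard_neighborSet_eq_three hz]

theorem connectedComponentMk_eq_of_adj_of_not_isLeafVertex (h : IsExtremalPair T F) {z w : V}
    (hz : ¬ IsLeafVertex F z) (hzw : T.Adj z w) :
    F.connectedComponentMk w = F.connectedComponentMk z := by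
  by_contra hw
  have hle := h.ncard_supp_le (F.connectedComponentMk z) (S := {z}) (by simp) fun v hv => by
    rw [h.supp_eq_insert_neighborSet hz] at hv
    rcases hv with rfl | hzv
    · exact .inl rfl
    · exact .inr ⟨⟨z, rfl, h.le hzv⟩, z, h.le hzv.symm, .inr (.inr ⟨rfl, w, hzw, hw⟩)⟩
  rw [h.ncard_supp_of_not_isLeafVertex hz, Set.ncard_singleton] at hle
  omega

theorem exists_adj_forall_connectedComponentMk_eq (h : IsExtremalPair T F) {z : V}
    (hz : ¬ IsLeafVertex F z) :
    ∃ a, F.Adj z a ∧ ∀ w, T.Adj a w → F.connectedComponentMk w = F.connectedComponentMk a := by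
  by_contra! hout
  have hle := h.ncard_supp_le (F.connectedComponentMk z) (S := {z}) (by simp) fun v hv => by
    rw [h.supp_eq_insert_neighborSet hz] at hv
    rcases hv with rfl | hzv
    · exact .inl rfl
    · obtain ⟨w, hvw, hw⟩ := hout v hzv
      rw [← ConnectedComponent.connectedComponentMk_eq_of_adj hzv] at hw
      exact .inr ⟨⟨z, rfl, h.le hzv⟩, w, hvw, .inr (.inl hw)⟩
  rw [h.ncard_supp_of_not_isLeafVertex hz, Set.ncard_singleton] at hle
  omega

theorem exists_isSeed (h : IsExtremalPair T F) {p p' : V} (hadj : T.Adj p p')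
    (hp : F.connectedComponentMk p ≠ F.connectedComponentMk p') (hhub : ¬ IsHub T F p') :
    ∃ S, IsSeed T F p p' S := by
  obtain ⟨t, hp't⟩ := exists_adj_of_odd h.odd p'
  by_cases hleaf : IsLeafVertex F p' ∧ IsLeafVertex F t
  · obtain ⟨w, z, hw, hwz, hz, hne⟩ :=
      exists_adj_of_not_isHub h.le hadj hp hhub hp't hleaf.1 hleaf.2
    have hsupp := supp_eq_pair_of_isLeafVertex hp't hleaf.1 hleaf.2
    refine ⟨{p'}, by simp, rfl,
      by rw [hsupp, Set.ncard_pair hp't.ne, Set.ncard_singleton], fun U hU v hv => ?_⟩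
    rw [hsupp] at hU hv
    have hzU : z ∉ U := fun hzU => by
      obtain ⟨rfl, rfl⟩ := hU w hw z hzU hz hwz.symm
      exact hne rfl rfl
    rcases hv with rfl | rfl
    · exact .inl rfl
    refine .inr ⟨⟨p', rfl, h.le hp't⟩, ?_⟩
    rcases hw with rfl | rfl
    · exact ⟨w, h.le hp't.symm, .inr (.inr ⟨rfl, z, hwz, hzU⟩)⟩
    · exact ⟨z, hwz, .inr (.inl hzU)⟩
  · exact ⟨core F p' t, core_subset_supp hp't, .inr (.inl rfl),
      two_mul_ncard_core_le h.isAcyclic h.odd hp't hleaf,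
      fun U _ v hv => partialNTDAt_core h.le hp't U hv⟩

theorem ncard_supp_le_of_not_isHub (h : IsExtremalPair T F) {c : F.ConnectedComponent}
    {p q p' q' : V} (hp : p ∈ c.supp) (hq : q ∈ c.supp) (hpq : p ≠ q) (hpp' : T.Adj p p')
    (hqq' : T.Adj q q') (hp' : F.connectedComponentMk p' ≠ c)
    (hq' : F.connectedComponentMk q' ≠ c) (hhub : ¬ IsHub T F p') (hhub' : ¬ IsHub T F q')
    {S : Set V} (hSc : S ⊆ c.supp)
    (hS : ∀ U, ∀ v ∈ c.supp, PartialNTDAt T U (S ∪ {p', q'}) v) :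
    c.supp.ncard ≤ 2 * S.ncard := by
  have hT := h.isTree.isAcyclic
  have hp'q' : F.connectedComponentMk p' ≠ F.connectedComponentMk q' := fun heq =>
    hpq (eq_and_eq_of_adj_of_preconnected_induce hT (preconnected_induce_supp h.le c)
      (preconnected_induce_supp h.le _) (disjoint_supp hp').symm hp hq rfl heq.symm hpp' hqq').1
  obtain ⟨P, hP⟩ := h.exists_isSeed hpp' (hp ▸ hp'.symm) hhub
  obtain ⟨Q, hQ⟩ := h.exists_isSeed hqq' (hq ▸ hq'.symm) hhub'
  have hle := h.ncard_le
    (hP.isPartialNTD_union hT h.le hp hq hpp' hqq' hp' hq' hp'q' hQ hSc hS)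
  rw [Set.ncard_union_eq (Set.disjoint_union_left.2 ⟨(disjoint_supp hq').symm,
    disjoint_supp hp'q'⟩), Set.ncard_union_eq (disjoint_supp hp').symm] at hle
  have hPcard := hP.card_le
  have hQcard := hQ.card_le
  have hSP := Set.ncard_union_le S P
  have hSPQ := Set.ncard_union_le (S ∪ P) Q
  omega

theorem not_isHeavy_and_isHeavy_of_isLeafVertex (h : IsExtremalPair T F) {p q : V}
    (hpq : F.Adj p q) (hp : IsLeafVertex F p) (hq : IsLeafVertex F q) :
    ¬ (IsHeavy T F p ∧ IsHeavy T F q) := by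
  rintro ⟨⟨p', hpp', hp', hhub⟩, q', hqq', hq', hhub'⟩
  have hmk := ConnectedComponent.connectedComponentMk_eq_of_adj hpq
  have hsupp := supp_eq_pair_of_isLeafVertex hpq hp hq
  have hle := h.ncard_supp_le_of_not_isHub (c := F.connectedComponentMk p) (S := ∅) rfl hmk.symm
    hpq.ne hpp' hqq' hp' (hmk ▸ hq') hhub hhub' (Set.empty_subset _) fun U v hv => by
      have hpN : p ∈ openNbhd T (∅ ∪ {p', q'}) := ⟨p', .inr (.inl rfl), hpp'.symm⟩
      have hqN : q ∈ openNbhd T (∅ ∪ {p', q'}) := ⟨q', .inr (.inr rfl), hqq'.symm⟩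
      rw [hsupp] at hv
      rcases hv with rfl | rfl
      exacts [.inr ⟨hpN, q, h.le hpq, .inl hqN⟩, .inr ⟨hqN, p, h.le hpq.symm, .inl hpN⟩]
  rw [hsupp, Set.ncard_pair hpq.ne, Set.ncard_empty] at hle
  omega

theorem not_isHeavy_and_isHeavy_of_not_isLeafVertex (h : IsExtremalPair T F) {z p q d : V}
    (hz : ¬ IsLeafVertex F z) (hN : F.neighborSet z = {p, q, d}) (hpq : p ≠ q) :
    ¬ (IsHeavy T F p ∧ IsHeavy T F q) := by
  rintro ⟨⟨p', hpp', hp', hhub⟩, q', hqq', hq', hhub'⟩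
  have hsupp := h.supp_eq_insert_neighborSet hz
  obtain ⟨hzp, hzq, hzd⟩ : F.Adj z p ∧ F.Adj z q ∧ F.Adj z d := by
    simp only [← mem_neighborSet, hN, Set.mem_insert_iff, Set.mem_singleton_iff, true_or, or_true,
      and_self]
  have hmkp := ConnectedComponent.connectedComponentMk_eq_of_adj hzp
  have hmkq := ConnectedComponent.connectedComponentMk_eq_of_adj hzq
  have hle := h.ncard_supp_le_of_not_isHub (c := F.connectedComponentMk z) (S := {d}) hmkp.symm
    hmkq.symm hpq hpp' hqq' (hmkp ▸ hp') (hmkq ▸ hq') hhub hhub' (hsupp ▸ by simp [hzd])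
    fun U v hv => by
      have hpN : p ∈ openNbhd T ({d} ∪ {p', q'}) := ⟨p', .inr (.inl rfl), hpp'.symm⟩
      have hqN : q ∈ openNbhd T ({d} ∪ {p', q'}) := ⟨q', .inr (.inr rfl), hqq'.symm⟩
      have hzN : z ∈ openNbhd T ({d} ∪ {p', q'}) := ⟨d, .inl rfl, h.le hzd.symm⟩
      rw [hsupp, hN] at hv
      rcases hv with rfl | rfl | rfl | rfl
      exacts [.inr ⟨hzN, p, h.le hzp, .inl hpN⟩, .inr ⟨hpN, z, h.le hzp.symm, .inl hzN⟩,
        .inr ⟨hqN, z, h.le hzq.symm, .inl hzN⟩, .inl (.inl rfl)]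
  rw [h.ncard_supp_of_not_isLeafVertex hz, Set.ncard_singleton] at hle
  omega

end IsExtremalPair

/-! ### The trees of the family -/

theorem adj_iff_adj_of_bijective {W : Type*} {H : SimpleGraph W} {G : SimpleGraph V}
    (hH : H.Connected) (hG : G.IsTree) (f : H →g G) (hf : Function.Bijective f) {a b : W} :
    G.Adj (f a) (f b) ↔ H.Adj a b := by
  refine ⟨fun hab => ?_, f.map_adj⟩
  have hle : H ≤ G.comap f := fun _ _ h => f.map_adj h
  have hcomap := (Iso.comap (.ofBijective f hf) G).isTree_iff.2 hG
  exact (isTree_iff_minimal_connected.1 hcomap).le_of_le hH hle hab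

theorem reachable_of_forall_adj {W : Type*} {G : SimpleGraph V} {H : SimpleGraph W} {f : V → W}
    (hf : ∀ a b, G.Adj a b → H.Reachable (f a) (f b)) {a b : V} (h : G.Reachable a b) :
    H.Reachable (f a) (f b) := by
  obtain ⟨p⟩ := h
  induction p with
  | nil => rfl
  | cons hadj _ ih => exact (hf _ _ hadj).trans ih

section baseTree

variable {ι : Type*} {T0 : SimpleGraph ι} {unit : ι → Bool}

theorem baseTree_adj_inl_inl {x y : ι} : (baseTree T0 unit).Adj (.inl x) (.inl y) ↔ T0.Adj x y := by
  simp only [baseTree, fromRel_adj, Sum.inl.injEq, reduceCtorEq]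
  grind [SimpleGraph.Adj.ne, SimpleGraph.adj_comm]

theorem baseTree_adj_inl_inr {x : ι} {u : UnitVerts unit} :
    (baseTree T0 unit).Adj (.inl x) (.inr u) ↔ u.1.1 = x ∧ u.1.2 = 0 := by
  simp only [baseTree, fromRel_adj, Sum.inl.injEq, Sum.inr.injEq, reduceCtorEq]
  grind

theorem baseTree_adj_inr_inr {u w : UnitVerts unit} :
    (baseTree T0 unit).Adj (.inr u) (.inr w) ↔
      u.1.1 = w.1.1 ∧ (u.1.2 = 0 ∧ w.1.2 ≠ 0 ∨ w.1.2 = 0 ∧ u.1.2 ≠ 0) := by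
  simp only [baseTree, fromRel_adj, Sum.inr.injEq, reduceCtorEq]
  grind

theorem baseTree_le {G : SimpleGraph (BaseVerts unit)}
    (hroot : ∀ x y, T0.Adj x y → G.Adj (.inl x) (.inl y))
    (hjoin : ∀ u : UnitVerts unit, u.1.2 = 0 → G.Adj (.inl u.1.1) (.inr u))
    (hpath : ∀ u w : UnitVerts unit, u.1.1 = w.1.1 → u.1.2 = 0 → w.1.2 ≠ 0 →
      G.Adj (.inr u) (.inr w)) : baseTree T0 unit ≤ G := by
  rintro a b ⟨-, (⟨x, y, rfl, rfl, h⟩ | ⟨x, u, rfl, rfl, rfl, h⟩ | ⟨u, w, rfl, rfl, h₁, h₂, h₃⟩) |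
    (⟨x, y, rfl, rfl, h⟩ | ⟨x, u, rfl, rfl, rfl, h⟩ | ⟨u, w, rfl, rfl, h₁, h₂, h₃⟩)⟩
  exacts [hroot x y h, hjoin u h, hpath u w h₁ h₂ h₃, (hroot x y h).symm, (hjoin u h).symm,
    (hpath u w h₁ h₂ h₃).symm]

/-- The index of the vertex of `T0` at which a vertex of the base tree was added. -/
def baseIndex : BaseVerts unit → ι :=
  Sum.elim id fun u => u.1.1

/-- The center of the unit added at `x`. -/
def unitCenter (unit : ι → Bool) (x : ι) : UnitVerts unit :=
  ⟨(x, 0), .inr rfl⟩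

/-- The leaf of its unit at which copies of `P2` may be appended: the single vertex of a `P2`-unit,
or the second end of the path of a star-unit. -/
def IsPort (u : UnitVerts unit) : Prop :=
  unit u.1.1 = false ∨ u.1.2 = 2

/-- The unique neighbor in the base tree of the port of the unit added at `x`. -/
def portSupport (unit : ι → Bool) (x : ι) : BaseVerts unit :=
  if unit x then .inr (unitCenter unit x) else .inl x

theorem unitVerts_ext {u w : UnitVerts unit} (h₁ : u.1.1 = w.1.1) (h₂ : u.1.2 = w.1.2) : u = w :=
  Subtype.ext (Prod.ext h₁ h₂)

theorem baseIndex_portSupport (x : ι) : baseIndex (portSupport unit x) = x := by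
  rw [portSupport]
  split <;> rfl

theorem IsPort.adj_iff {u : UnitVerts unit} (hu : IsPort u) {y : BaseVerts unit} :
    (baseTree T0 unit).Adj (.inr u) y ↔ y = portSupport unit u.1.1 := by
  have hvalid := u.2
  rcases y with y | w
  · rw [adj_comm, baseTree_adj_inl_inr]
    simp only [IsPort, portSupport] at *
    grind
  · have hw := w.2
    have hext : w = unitCenter unit u.1.1 ↔ w.1.1 = u.1.1 ∧ w.1.2 = 0 :=
      ⟨by rintro rfl; exact ⟨rfl, rfl⟩, fun h => unitVerts_ext h.1 h.2⟩
    rw [baseTree_adj_inr_inr]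
    simp only [IsPort, portSupport] at *
    grind

theorem IsPort.isLeafVertex {u : UnitVerts unit} (hu : IsPort u) :
    IsLeafVertex (baseTree T0 unit) (.inr u) :=
  ⟨_, hu.adj_iff.2 rfl, fun _ => hu.adj_iff.1⟩

theorem IsPort.ext {u w : UnitVerts unit} (hu : IsPort u) (hw : IsPort w)
    (h : u.1.1 = w.1.1) : u = w := by
  refine unitVerts_ext h ?_
  have huvalid := u.2
  have hwvalid := w.2
  simp only [IsPort] at *
  grind

theorem baseTree_preconnected (hT0 : T0.Preconnected) : (baseTree T0 unit).Preconnected := by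
  have hinl : ∀ x y, (baseTree T0 unit).Reachable (.inl x) (.inl y) := fun x y =>
    reachable_of_forall_adj (fun _ _ h => (baseTree_adj_inl_inl.2 h).reachable) (hT0 x y)
  have hcenter : ∀ x, (baseTree T0 unit).Reachable (.inr (unitCenter unit x)) (.inl x) := fun x =>
    (Adj.reachable (baseTree_adj_inl_inr.2 ⟨rfl, rfl⟩)).symm
  have hindex : ∀ v : BaseVerts unit, (baseTree T0 unit).Reachable v (.inl (baseIndex v)) := by
    rintro (x | u)
    · rfl
    by_cases hu : u.1.2 = 0
    · exact (Adj.reachable (baseTree_adj_inl_inr.2 ⟨rfl, hu⟩)).symm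
    · have hadj : (baseTree T0 unit).Adj (.inr u) (.inr (unitCenter unit u.1.1)) :=
        baseTree_adj_inr_inr.2 ⟨rfl, .inr ⟨rfl, hu⟩⟩
      exact hadj.reachable.trans (hcenter _)
  exact fun v w => (hindex v).trans ((hinl _ _).trans (hindex w).symm)

theorem IsPort.three_le_dist (hT0 : T0.Preconnected) {u w : UnitVerts unit} (hu : IsPort u)
    (hw : IsPort w) (hne : u ≠ w) : 3 ≤ (baseTree T0 unit).dist (.inr u) (.inr w) := by
  have hsupport : portSupport unit u.1.1 ≠ .inr w := fun h => by
    simp only [portSupport] at h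
    split at h
    · cases h
      exact hw.elim (by simp_all [unitCenter]) (by simp [unitCenter])
    · cases h
  have hdist : 2 < (baseTree T0 unit).edist (.inr u) (.inr w) := by
    refine two_lt_edist_iff.2 ⟨fun h => hne (Sum.inr.inj h), fun h => ?_, ?_⟩
    · exact hsupport (hu.adj_iff.1 h).symm
    · refine Set.eq_empty_of_forall_notMem fun y hy => hne (hu.ext hw ?_)
      have h := (hu.adj_iff.1 hy.1).symm.trans (hw.adj_iff.1 hy.2)
      rw [← baseIndex_portSupport u.1.1, h, baseIndex_portSupport]
  rw [← (baseTree_preconnected hT0 _ _).coe_dist_eq_edist] at hdist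
  exact_mod_cast hdist

end baseTree

section fullTree

variable {α : Type*} {T0 : SimpleGraph α} {unit : α → Bool} {k : BaseVerts unit → ℕ}

theorem fullTree_le {G : SimpleGraph (FullVerts unit k)}
    (hbase : ∀ v w, (baseTree T0 unit).Adj v w → G.Adj (.inl v) (.inl w))
    (hjoin : ∀ t : AppendVerts unit k, t.1.2.2 = 0 → G.Adj (.inl t.1.1) (.inr t))
    (hcopy : ∀ t s : AppendVerts unit k, t.1.1 = s.1.1 → t.1.2.1 = s.1.2.1 → t.1.2.2 = 0 →
      s.1.2.2 = 1 → G.Adj (.inr t) (.inr s)) : fullTree T0 unit k ≤ G := by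
  rintro a b ⟨-, (⟨v, w, rfl, rfl, h⟩ | ⟨v, t, rfl, rfl, rfl, h⟩ |
    ⟨t, s, rfl, rfl, h₁, h₂, h₃, h₄⟩) | (⟨v, w, rfl, rfl, h⟩ | ⟨v, t, rfl, rfl, rfl, h⟩ |
    ⟨t, s, rfl, rfl, h₁, h₂, h₃, h₄⟩)⟩
  exacts [hbase v w h, hjoin t h, hcopy t s h₁ h₂ h₃ h₄, (hbase v w h).symm, (hjoin t h).symm,
    (hcopy t s h₁ h₂ h₃ h₄).symm]

theorem fullTree_preconnected (hT0 : T0.Preconnected) : (fullTree T0 unit k).Preconnected := by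
  have hinl : ∀ v w, (fullTree T0 unit k).Reachable (.inl v) (.inl w) := fun v w =>
    reachable_of_forall_adj (fun v w h => Adj.reachable (G := fullTree T0 unit k)
      ⟨fun he => h.ne (Sum.inl.inj he), .inl (.inl ⟨v, w, rfl, rfl, h⟩)⟩)
      (baseTree_preconnected hT0 v w)
  have hjoin : ∀ t : AppendVerts unit k, t.1.2.2 = 0 →
      (fullTree T0 unit k).Reachable (.inr t) (.inl t.1.1) := fun t ht =>
    Adj.reachable ⟨Sum.inr_ne_inl, .inr (.inr (.inl ⟨_, t, rfl, rfl, rfl, ht⟩))⟩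
  have hinr : ∀ t : AppendVerts unit k, (fullTree T0 unit k).Reachable (.inr t) (.inl t.1.1) := by
    intro t
    obtain ht | ht : t.1.2.2 = 0 ∨ t.1.2.2 = 1 := by lia
    · exact hjoin t ht
    · let s : AppendVerts unit k := ⟨(t.1.1, t.1.2.1, 0), t.2⟩
      have hst : (fullTree T0 unit k).Adj (.inr t) (.inr s) := by
        refine ⟨fun h => ?_, .inr (.inr (.inr ⟨s, t, rfl, rfl, rfl, rfl, rfl, ht⟩))⟩
        have h := congrArg (fun t => t.1.2.2) (Sum.inr.inj h)
        exact zero_ne_one (h.symm.trans ht)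
      exact hst.reachable.trans (hjoin s rfl)
  have hbase : ∀ v : FullVerts unit k, ∃ w, (fullTree T0 unit k).Reachable v (.inl w) := by
    rintro (v | t)
    exacts [⟨v, .rfl⟩, ⟨_, hinr t⟩]
  intro v w
  obtain ⟨v', hv⟩ := hbase v
  obtain ⟨w', hw⟩ := hbase w
  exact hv.trans ((hinl _ _).trans hw.symm)

end fullTree

/-! ### Unit systems -/

section UnitSystem

variable {ι : Type*} {unit : ι → Bool} {G : SimpleGraph (BaseVerts unit)}

/-- The root `x` of a unit hangs off a vertex of another unit which is not a root; with the single
vertex of its unit it is going to be one of the appended copies of `P2`. -/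
def IsAppended (G : SimpleGraph (BaseVerts unit)) (x : ι) : Prop :=
  ∃ u : UnitVerts unit, u.1.1 ≠ x ∧ G.Adj (.inr u) (.inl x)

/-- `G` consists of the disjoint roots with their units, of edges between roots, and of edges
joining the port of a unit to the root of a `P2`-unit without any other edges to the rest of `G`. -/
structure IsUnitSystem (G : SimpleGraph (BaseVerts unit)) : Prop where
  baseTree_bot_le : baseTree ⊥ unit ≤ G
  eq_inl : ∀ {u v}, G.Adj (.inr u) v → baseIndex v ≠ u.1.1 → v = .inl (baseIndex v)
  isPort : ∀ {u x}, G.Adj (.inr u) (.inl x) → u.1.1 ≠ x → IsPort u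
  unit_eq_false : ∀ {x}, IsAppended G x → unit x = false
  eq_inr : ∀ {u x v}, G.Adj (.inr u) (.inl x) → u.1.1 ≠ x → G.Adj (.inl x) v → baseIndex v ≠ x →
    v = .inr u
  baseIndex_eq : ∀ {x v}, IsAppended G x → G.Adj (.inr (unitCenter unit x)) v → baseIndex v = x

/-- The vertices of the tree `T0` underlying a unit system. -/
abbrev KeptRoot (G : SimpleGraph (BaseVerts unit)) : Type _ := {x : ι // ¬ IsAppended G x}

/-- The types of the units at the vertices of `T0`. -/
abbrev keptUnit (G : SimpleGraph (BaseVerts unit)) (x : KeptRoot G) : Bool := unit x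

/-- The tree `T0` underlying a unit system. -/
def keptTree (G : SimpleGraph (BaseVerts unit)) : SimpleGraph (KeptRoot G) :=
  G.comap fun x => .inl x.1

/-- The inclusion of the base tree `T1` in a unit system. -/
def baseInclusion (G : SimpleGraph (BaseVerts unit)) :
    BaseVerts (keptUnit G) → BaseVerts unit :=
  Sum.map Subtype.val fun u => ⟨(u.1.1, u.1.2), u.2⟩

/-- The copies of `P2` appended to the vertex `v` of `T1`, given by their roots. -/
abbrev AppendedAt (G : SimpleGraph (BaseVerts unit)) (v : BaseVerts (keptUnit G)) : Type _ :=
  {x : ι // IsAppended G x ∧ G.Adj (baseInclusion G v) (.inl x)}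

/-- The number of copies of `P2` appended to the vertex `v` of `T1`. -/
noncomputable def appendCount (G : SimpleGraph (BaseVerts unit)) (v : BaseVerts (keptUnit G)) : ℕ :=
  Nat.card (AppendedAt G v)

theorem baseIndex_baseInclusion (v : BaseVerts (keptUnit G)) :
    baseIndex (baseInclusion G v) = (baseIndex v).1 := by
  cases v <;> rfl

theorem baseInclusion_injective : Function.Injective (baseInclusion G) := by
  refine Sum.map_injective.2 ⟨Subtype.val_injective, fun u w h => ?_⟩
  have h := congrArg Subtype.val h
  exact unitVerts_ext (Subtype.ext (Prod.ext_iff.1 h).1) (Prod.ext_iff.1 h).2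

theorem exists_baseInclusion_eq {v : BaseVerts unit} (hv : ¬ IsAppended G (baseIndex v)) :
    ∃ w, baseInclusion G w = v := by
  rcases v with x | u
  exacts [⟨.inl ⟨x, hv⟩, rfl⟩, ⟨.inr ⟨(⟨u.1.1, hv⟩, u.1.2), u.2⟩, rfl⟩]

/-- The vertex of `T0` to whose unit a given root is appended, or the given root if it lies in
`T0`. -/
noncomputable def anchor (G : SimpleGraph (BaseVerts unit)) (x : ι) : ι :=
  open Classical in if h : IsAppended G x then h.choose.1.1 else x

namespace IsUnitSystem

theorem eq_unitCenter (h : IsUnitSystem G) {u : UnitVerts unit} (hu : IsAppended G u.1.1) :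
    u = unitCenter unit u.1.1 :=
  unitVerts_ext rfl (u.2.resolve_left (by simp [h.unit_eq_false hu]))

theorem not_isAppended_of_adj (h : IsUnitSystem G) {u : UnitVerts unit} {x : ι}
    (hadj : G.Adj (.inr u) (.inl x)) (hne : u.1.1 ≠ x) : ¬ IsAppended G u.1.1 := fun hu => by
  rw [h.eq_unitCenter hu] at hadj
  exact hne (h.baseIndex_eq hu hadj).symm

theorem anchor_eq (h : IsUnitSystem G) {u : UnitVerts unit} {x : ι}
    (hadj : G.Adj (.inr u) (.inl x)) (hne : u.1.1 ≠ x) : anchor G x = u.1.1 := by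
  have hx : IsAppended G x := ⟨u, hne, hadj⟩
  rw [anchor, dif_pos hx]
  obtain ⟨hne', hadj'⟩ := hx.choose_spec
  rw [← Sum.inr.inj (h.eq_inr hadj hne hadj'.symm hne')]

theorem not_isAppended_anchor (h : IsUnitSystem G) (x : ι) : ¬ IsAppended G (anchor G x) := by
  by_cases hx : IsAppended G x
  · obtain ⟨u, hne, hadj⟩ := id hx
    rw [h.anchor_eq hadj hne]
    exact h.not_isAppended_of_adj hadj hne
  · rwa [anchor, dif_neg hx]

theorem anchor_baseIndex_eq_of_adj (h : IsUnitSystem G) {u : UnitVerts unit} {v : BaseVerts unit}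
    (hadj : G.Adj (.inr u) v) : anchor G (baseIndex v) = anchor G u.1.1 := by
  by_cases hne : baseIndex v = u.1.1
  · rw [hne]
  have hv := h.eq_inl hadj hne
  rw [hv] at hadj
  rw [h.anchor_eq hadj (Ne.symm hne), anchor, dif_neg (h.not_isAppended_of_adj hadj (Ne.symm hne))]

theorem not_isAppended_of_adj_inl (h : IsUnitSystem G) {x y : ι} (hadj : G.Adj (.inl x) (.inl y)) :
    ¬ IsAppended G x := by
  rintro ⟨u, hne, hux⟩
  have hyx : y ≠ x := by
    rintro rfl
    exact hadj.ne rfl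
  cases h.eq_inr hux hne hadj hyx

theorem reachable_keptTree (h : IsUnitSystem G) (v w : BaseVerts unit) (hadj : G.Adj v w) :
    (keptTree G).Reachable ⟨anchor G (baseIndex v), h.not_isAppended_anchor _⟩
      ⟨anchor G (baseIndex w), h.not_isAppended_anchor _⟩ := by
  rcases v with x | u
  · rcases w with y | u
    · refine Adj.reachable (show G.Adj (.inl (anchor G x)) (.inl (anchor G y)) from ?_)
      rwa [anchor, anchor, dif_neg (h.not_isAppended_of_adj_inl hadj),
        dif_neg (h.not_isAppended_of_adj_inl hadj.symm)]
    · simp only [h.anchor_baseIndex_eq_of_adj hadj.symm]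
      rfl
  · simp only [h.anchor_baseIndex_eq_of_adj hadj]
    rfl

theorem isTree_keptTree (h : IsUnitSystem G) (hG : G.IsTree) : (keptTree G).IsTree := by
  obtain ⟨v⟩ := hG.connected.nonempty
  have : Nonempty (KeptRoot G) := ⟨⟨_, h.not_isAppended_anchor (baseIndex v)⟩⟩
  refine ⟨⟨fun x y => ?_⟩, hG.isAcyclic.comap (Hom.comap (fun x : KeptRoot G => .inl x.1) G)
    (Sum.inl_injective.comp Subtype.val_injective)⟩
  have hxy := reachable_of_forall_adj
    (f := fun v => (⟨_, h.not_isAppended_anchor (baseIndex v)⟩ : KeptRoot G)) h.reachable_keptTree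
    (hG.connected.preconnected (.inl x.1) (.inl y.1))
  have hanchor : ∀ x : KeptRoot G, (⟨_, h.not_isAppended_anchor x.1⟩ : KeptRoot G) = x := fun x =>
    Subtype.ext (dif_neg x.2)
  exact (hanchor x).symm ▸ (hanchor y).symm ▸ hxy

theorem exists_isPort_of_appendedAt (h : IsUnitSystem G) {v : BaseVerts (keptUnit G)}
    (x : AppendedAt G v) : ∃ u, v = .inr u ∧ IsPort u := by
  rcases v with y | u
  · exact absurd x.2.1 (h.not_isAppended_of_adj_inl x.2.2.symm)
  · refine ⟨u, rfl, ?_⟩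
    have hne : (u.1.1 : ι) ≠ x.1 := fun he => u.1.1.2 (he ▸ x.2.1)
    exact h.isPort x.2.2 hne

theorem exists_appendedAt (h : IsUnitSystem G) {x : ι} (hx : IsAppended G x) :
    ∃ v, ∃ y : AppendedAt G v, y.1 = x := by
  obtain ⟨u, hne, hadj⟩ := id hx
  obtain ⟨v, hv⟩ := exists_baseInclusion_eq (v := .inr u) (h.not_isAppended_of_adj hadj hne)
  exact ⟨v, ⟨x, hx, hv ▸ hadj⟩, rfl⟩

theorem eq_of_appendedAt (h : IsUnitSystem G) {v w : BaseVerts (keptUnit G)} (x : AppendedAt G v)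
    (y : AppendedAt G w) (hxy : x.1 = y.1) : v = w := by
  obtain ⟨u, hne, hadj⟩ := x.2.1
  have hinr : ∀ v : BaseVerts (keptUnit G), G.Adj (baseInclusion G v) (.inl x.1) →
      baseInclusion G v = .inr u := fun v hv => by
    refine h.eq_inr hadj hne hv.symm fun he => ?_
    rw [baseIndex_baseInclusion] at he
    exact (baseIndex v).2 (he ▸ x.2.1)
  exact baseInclusion_injective ((hinr v x.2.2).trans (hinr w (hxy ▸ y.2.2)).symm)

end IsUnitSystem

/-- The copy of `P2` to which a vertex appended to the base tree belongs, given by its root. -/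
noncomputable def appendedRoot (G : SimpleGraph (BaseVerts unit))
    (t : AppendVerts (keptUnit G) (appendCount G)) : AppendedAt G t.1.1 :=
  have : Finite (AppendedAt G t.1.1) := Nat.finite_of_card_ne_zero (Nat.ne_zero_of_lt t.2)
  (Finite.equivFin _).symm ⟨t.1.2.1, t.2⟩

/-- The identification of the tree built from `T0` with the given unit system. -/
noncomputable def fullMap (G : SimpleGraph (BaseVerts unit)) :
    FullVerts (keptUnit G) (appendCount G) → BaseVerts unit :=
  Sum.elim (baseInclusion G) fun t =>
    if t.1.2.2 = 0 then .inl (appendedRoot G t).1 else .inr (unitCenter unit (appendedRoot G t).1)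

theorem baseIndex_fullMap_inr (t : AppendVerts (keptUnit G) (appendCount G)) :
    baseIndex (fullMap G (.inr t)) = (appendedRoot G t).1 := by
  rw [fullMap, Sum.elim_inr]
  split <;> rfl

theorem appendedRoot_eq_iff {t s : AppendVerts (keptUnit G) (appendCount G)}
    (h : t.1.1 = s.1.1) : (appendedRoot G t).1 = (appendedRoot G s).1 ↔ t.1.2.1 = s.1.2.1 := by
  obtain ⟨⟨v, i, j⟩, ht⟩ := t
  obtain ⟨⟨w, i', j'⟩, hs⟩ := s
  obtain rfl : v = w := h
  simp only [appendedRoot, Subtype.val_inj, EmbeddingLike.apply_eq_iff_eq]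
  exact Fin.mk_eq_mk

theorem exists_appendedRoot_eq [Finite ι] {v : BaseVerts (keptUnit G)} (x : AppendedAt G v)
    (j : Fin 2) : ∃ t, (appendedRoot G t).1 = x.1 ∧ t.1.2.2 = j := by
  let i := Finite.equivFin _ x
  exact ⟨⟨(v, i, j), i.2⟩, congrArg Subtype.val ((Finite.equivFin _).symm_apply_apply x), rfl⟩

namespace IsUnitSystem

theorem fullMap_inr_injective (h : IsUnitSystem G) :
    Function.Injective fun t => fullMap G (.inr t) := by
  intro t s hts
  have hroot : (appendedRoot G t).1 = (appendedRoot G s).1 := by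
    rw [← baseIndex_fullMap_inr, ← baseIndex_fullMap_inr]
    exact congrArg baseIndex hts
  have hbase := h.eq_of_appendedAt _ _ hroot
  have hcopy := (appendedRoot_eq_iff hbase).1 hroot
  refine Subtype.ext (Prod.ext hbase (Prod.ext hcopy ?_))
  simp only [fullMap, Sum.elim_inr] at hts
  split_ifs at hts <;> lia

theorem fullMap_bijective [Finite ι] (h : IsUnitSystem G) : Function.Bijective (fullMap G) := by
  refine ⟨baseInclusion_injective.sumElim h.fullMap_inr_injective fun v t hvt => ?_, fun v => ?_⟩
  · have hindex : baseIndex (baseInclusion G v) = baseIndex (fullMap G (.inr t)) :=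
      congrArg baseIndex hvt
    rw [baseIndex_baseInclusion] at hindex
    have happended := (appendedRoot G t).2.1
    rw [← baseIndex_fullMap_inr, ← hindex] at happended
    exact (baseIndex v).2 happended
  · by_cases hv : IsAppended G (baseIndex v)
    · obtain ⟨w, x, hx⟩ := h.exists_appendedAt hv
      rcases v with y | u
      · obtain ⟨t, ht, hj⟩ := exists_appendedRoot_eq x 0
        exact ⟨.inr t, by simp [fullMap, hj, ht, hx, baseIndex]⟩
      · obtain ⟨t, ht, hj⟩ := exists_appendedRoot_eq x 1
        exact ⟨.inr t, by simp [fullMap, hj, ht, hx, baseIndex, ← h.eq_unitCenter hv]⟩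
    · obtain ⟨w, hw⟩ := exists_baseInclusion_eq hv
      exact ⟨.inl w, hw⟩

theorem baseTree_le_comap (h : IsUnitSystem G) :
    baseTree (keptTree G) (keptUnit G) ≤ G.comap (baseInclusion G) :=
  baseTree_le (fun _ _ hxy => hxy)
    (fun _ hu => h.baseTree_bot_le (baseTree_adj_inl_inr.2 ⟨rfl, hu⟩))
    fun _ _ huw hu hw => h.baseTree_bot_le
      (baseTree_adj_inr_inr.2 ⟨congrArg Subtype.val huw, .inl ⟨hu, hw⟩⟩)

theorem fullTree_le_comap (h : IsUnitSystem G) :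
    fullTree (keptTree G) (keptUnit G) (appendCount G) ≤ G.comap (fullMap G) := by
  refine fullTree_le (fun v w hvw => h.baseTree_le_comap hvw) (fun t ht => ?_)
    fun t s hbase hcopy ht hs => ?_
  · simpa [fullMap, ht] using (appendedRoot G t).2.2
  · have hroot := (appendedRoot_eq_iff hbase).2 hcopy
    simp only [comap_adj, fullMap, Sum.elim_inr, ht, hs, hroot]
    exact h.baseTree_bot_le (baseTree_adj_inl_inr.2 ⟨rfl, rfl⟩)

end IsUnitSystem

end UnitSystem

/-- Membership of `T` in the family `𝒯`. -/
def MemFamily (T : SimpleGraph V) : Prop :=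
  ∃ (α : Type) (T0 : SimpleGraph α) (unit : α → Bool) (k : BaseVerts unit → ℕ),
    T0.IsTree ∧
    (∀ v, 0 < k v → IsLeafVertex (baseTree T0 unit) v) ∧
    (∀ u v, 0 < k u → 0 < k v → u ≠ v → 3 ≤ (baseTree T0 unit).dist u v) ∧
    Nonempty (T ≃g fullTree T0 unit k)

theorem IsUnitSystem.memFamily {ι : Type} [Finite ι] {unit : ι → Bool}
    {G : SimpleGraph (BaseVerts unit)} (h : IsUnitSystem G) (hG : G.IsTree) : MemFamily G := by
  have hT0 := h.isTree_keptTree hG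
  have hport : ∀ v, 0 < appendCount G v → ∃ u, v = .inr u ∧ IsPort u := fun v hv =>
    have := (Nat.card_pos_iff.1 hv).1
    h.exists_isPort_of_appendedAt (Classical.arbitrary (AppendedAt G v))
  have hconnected : (fullTree (keptTree G) (keptUnit G) (appendCount G)).Connected :=
    have := hG.connected.nonempty
    have := h.fullMap_bijective.surjective.nonempty
    ⟨fullTree_preconnected hT0.connected.preconnected⟩
  let f : fullTree (keptTree G) (keptUnit G) (appendCount G) →g G :=
    ⟨fullMap G, fun hadj => h.fullTree_le_comap hadj⟩
  refine ⟨KeptRoot G, keptTree G, keptUnit G, appendCount G, hT0, fun v hv => ?_,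
    fun v w hv hw hne => ?_, ⟨.symm ⟨.ofBijective _ h.fullMap_bijective,
      adj_iff_adj_of_bijective hconnected hG f h.fullMap_bijective⟩⟩⟩
  · obtain ⟨u, rfl, hu⟩ := hport v hv
    exact hu.isLeafVertex
  · obtain ⟨u, rfl, hu⟩ := hport v hv
    obtain ⟨w, rfl, hw'⟩ := hport w hw
    exact hu.three_le_dist hT0.connected.preconnected hw' fun he => hne (he ▸ rfl)

/-! ### Roots of components -/

/-- A labelling of the component `c` of `F` by the vertices `r` and `u i` of one of the two kinds of
units, following the conventions of `UnitVerts` for the validity of an index `i`. The root `r` is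
chosen such that all edges leaving `c` from another vertex start in the port and end in a hub. -/
structure IsFrame (T F : SimpleGraph V) (c : F.ConnectedComponent) (b : Bool) (r : V)
    (u : Fin 3 → V) : Prop where
  root_mem : r ∈ c.supp
  adj_root : F.Adj r (u 0)
  adj : b = true → ∀ i ≠ 0, F.Adj (u 0) (u i)
  eq_or_exists : ∀ v ∈ c.supp, v = r ∨ ∃ i, (b = true ∨ i = 0) ∧ v = u i
  ne_root : ∀ i, b = true ∨ i = 0 → u i ≠ r
  injOn : Set.InjOn u {i | b = true ∨ i = 0}
  outer : ∀ i, b = true ∨ i = 0 → ∀ w, T.Adj (u i) w → F.connectedComponentMk w ≠ c →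
    (b = false ∨ i = 2) ∧ IsHub T F w
  hub : ∀ w ∈ c.supp, IsHub T F w →
    b = false ∧ w = r ∧ ∀ v, T.Adj (u 0) v → F.connectedComponentMk v = c

theorem isHub_of_not_isHeavy {T F : SimpleGraph V} {v w : V} (hv : ¬ IsHeavy T F v)
    (hvw : T.Adj v w) (hw : F.connectedComponentMk w ≠ F.connectedComponentMk v) : IsHub T F w := by
  by_contra hhub
  exact hv ⟨w, hvw, hw, hhub⟩

theorem isFrame_pair {T F : SimpleGraph V} {r t : V} (hrt : F.Adj r t) (hr : IsLeafVertex F r)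
    (ht : IsLeafVertex F t) (hlight : ¬ IsHeavy T F t)
    (hhub : ∀ w ∈ ({r, t} : Set V), IsHub T F w →
      w = r ∧ ∀ v, T.Adj t v → F.connectedComponentMk v = F.connectedComponentMk r) :
    IsFrame T F (F.connectedComponentMk r) false r fun _ => t := by
  have hsupp := supp_eq_pair_of_isLeafVertex hrt hr ht
  refine ⟨rfl, hrt, nofun, fun v hv => ?_, fun _ _ => hrt.ne', fun i hi j hj _ => ?_,
    fun i _ w htw hw => ⟨.inl rfl, isHub_of_not_isHeavy hlight htw ?_⟩,
    fun w hw hwhub => ⟨rfl, hhub w (hsupp ▸ hw) hwhub⟩⟩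
  · rw [hsupp] at hv
    exact hv.imp_right fun hv => ⟨0, .inr rfl, hv⟩
  · exact (hi.resolve_left Bool.false_ne_true).trans (hj.resolve_left Bool.false_ne_true).symm
  · rwa [← ConnectedComponent.connectedComponentMk_eq_of_adj hrt]

theorem isFrame_pair_of_isHub {T F : SimpleGraph V} {r t : V} (hle : F ≤ T) (hrt : F.Adj r t)
    (ht : IsLeafVertex F t) (hr : IsHub T F r) :
    IsFrame T F (F.connectedComponentMk r) false r fun _ => t := by
  have hmk := ConnectedComponent.connectedComponentMk_eq_of_adj hrt
  have hinner : ∀ v, T.Adj t v → F.connectedComponentMk v = F.connectedComponentMk r :=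
    fun v htv => congrArg _ ((hr.2.1 t hrt).unique htv (hle hrt.symm))
  refine isFrame_pair hrt hr.1 ht (fun ⟨v, htv, hv, _⟩ => hv ((hinner v htv).trans hmk)) ?_
  rintro w (rfl | rfl) hw
  · exact ⟨rfl, hinner⟩
  · obtain ⟨v, ⟨hwv, hv⟩, -⟩ := hw.2.2
    exact absurd ((hinner v hwv).trans hmk) hv

namespace IsExtremalPair

variable [Finite V] {T F : SimpleGraph V}

theorem exists_isFrame_of_isLeafVertex (h : IsExtremalPair T F) {p q : V} (hpq : F.Adj p q)
    (hp : IsLeafVertex F p) (hq : IsLeafVertex F q) :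
    ∃ r u, IsFrame T F (F.connectedComponentMk p) false r u := by
  have hmk := ConnectedComponent.connectedComponentMk_eq_of_adj hpq
  by_cases hphub : IsHub T F p
  · exact ⟨p, _, isFrame_pair_of_isHub h.le hpq hq hphub⟩
  by_cases hqhub : IsHub T F q
  · exact ⟨q, _, hmk ▸ isFrame_pair_of_isHub h.le hpq.symm hp hqhub⟩
  by_cases hheavy : IsHeavy T F q
  · have hlight : ¬ IsHeavy T F p :=
      fun hp' => h.not_isHeavy_and_isHeavy_of_isLeafVertex hpq hp hq ⟨hp', hheavy⟩
    refine ⟨q, _, hmk ▸ isFrame_pair hpq.symm hq hp hlight ?_⟩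
    rintro w (rfl | rfl) hw
    exacts [absurd hw hqhub, absurd hw hphub]
  · refine ⟨p, _, isFrame_pair hpq hp hq hheavy ?_⟩
    rintro w (rfl | rfl) hw
    exacts [absurd hw hphub, absurd hw hqhub]

theorem not_isHub (h : IsExtremalPair T F) {z w : V} (hz : ¬ IsLeafVertex F z)
    (hw : w ∈ (F.connectedComponentMk z).supp) : ¬ IsHub T F w := by
  intro hhub
  rw [h.supp_eq_insert_neighborSet hz] at hw
  rcases hw with rfl | hzw
  · exact hz hhub.1
  · exact hz ⟨w, hzw, fun v hzv => (hhub.2.1 z hzw.symm).unique (h.le hzv) (h.le hzw)⟩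

theorem isFrame_star (h : IsExtremalPair T F) {z p a q : V} (hz : ¬ IsLeafVertex F z)
    (hN : F.neighborSet z = {p, a, q}) (hpa : p ≠ a) (hpq : p ≠ q) (haq : a ≠ q)
    (ha : ∀ w, T.Adj a w → F.connectedComponentMk w = F.connectedComponentMk a)
    (hq : ¬ IsHeavy T F q) :
    IsFrame T F (F.connectedComponentMk z) true p ![z, a, q] := by
  obtain ⟨hzp, hza, hzq⟩ : F.Adj z p ∧ F.Adj z a ∧ F.Adj z q := by
    simp only [← mem_neighborSet, hN, Set.mem_insert_iff, Set.mem_singleton_iff, true_or, or_true,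
      and_self]
  have hmk : ∀ {v}, F.Adj z v → F.connectedComponentMk z = F.connectedComponentMk v :=
    ConnectedComponent.connectedComponentMk_eq_of_adj
  refine ⟨(hmk hzp).symm, hzp.symm, fun _ i hi => ?_, fun v hv => ?_, fun i _ => ?_,
    fun i _ j _ hij => ?_, fun i _ w hw hmkw => ?_, fun _ hw hhub =>
      absurd hhub (h.not_isHub hz hw)⟩
  · fin_cases i
    exacts [absurd rfl hi, hza, hzq]
  · rw [h.supp_eq_insert_neighborSet hz, hN] at hv
    rcases hv with rfl | rfl | rfl | rfl
    exacts [.inr ⟨0, .inl rfl, rfl⟩, .inl rfl, .inr ⟨1, .inl rfl, rfl⟩, .inr ⟨2, .inl rfl, rfl⟩]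
  · fin_cases i
    exacts [hzp.ne, hpa.symm, hpq.symm]
  · have := hza.ne
    have := hzq.ne
    fin_cases i <;> fin_cases j <;> simp_all
  · fin_cases i
    · exact absurd (h.connectedComponentMk_eq_of_adj_of_not_isLeafVertex hz hw) hmkw
    · exact absurd ((ha w hw).trans (hmk hza).symm) hmkw
    · exact ⟨.inr rfl, isHub_of_not_isHeavy hq hw (hmk hzq ▸ hmkw)⟩

theorem exists_isFrame_of_not_isLeafVertex (h : IsExtremalPair T F) {z : V}
    (hz : ¬ IsLeafVertex F z) : ∃ r u, IsFrame T F (F.connectedComponentMk z) true r u := by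
  obtain ⟨a, hza, ha⟩ := h.exists_adj_forall_connectedComponentMk_eq hz
  have htwo : (F.neighborSet z \ {a}).ncard = 2 := by
    rw [Set.ncard_sdiff_singleton_of_mem (s := F.neighborSet z) hza,
      h.ncard_neighborSet_eq_three hz]
  obtain ⟨p, q, hpq, hdiff⟩ := Set.ncard_eq_two.1 htwo
  have hN : F.neighborSet z = {a, p, q} := by
    rw [← hdiff, Set.insert_sdiff_singleton, Set.insert_eq_of_mem (s := F.neighborSet z) hza]
  have hpa : p ≠ a := (hdiff.symm.subset (.inl rfl)).2
  have hqa : q ≠ a := (hdiff.symm.subset (.inr rfl)).2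
  by_cases hq : IsHeavy T F q
  · have hN' : F.neighborSet z = {q, a, p} := by
      rw [hN, Set.insert_comm q, Set.pair_comm q]
    have hp : ¬ IsHeavy T F p := fun hp => h.not_isHeavy_and_isHeavy_of_not_isLeafVertex hz
      (hN'.trans (by rw [Set.pair_comm])) hpq.symm ⟨hq, hp⟩
    exact ⟨q, _, h.isFrame_star hz hN' hqa hpq.symm hpa.symm ha hp⟩
  · exact ⟨p, _, h.isFrame_star hz (hN.trans (Set.insert_comm _ _ _)) hpa hpq hqa.symm ha hq⟩

theorem exists_isFrame (h : IsExtremalPair T F) (c : F.ConnectedComponent) :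
    ∃ b r u, IsFrame T F c b r u := by
  induction c using ConnectedComponent.ind with | _ v =>
  obtain ⟨t, hvt⟩ := exists_adj_of_odd h.odd v
  by_cases hv : IsLeafVertex F v
  · by_cases ht : IsLeafVertex F t
    · exact ⟨_, h.exists_isFrame_of_isLeafVertex hvt hv ht⟩
    · rw [ConnectedComponent.connectedComponentMk_eq_of_adj hvt]
      exact ⟨_, h.exists_isFrame_of_not_isLeafVertex ht⟩
  · exact ⟨_, h.exists_isFrame_of_not_isLeafVertex hv⟩

end IsExtremalPair

section frameMap

variable {T F : SimpleGraph V} {unit : F.ConnectedComponent → Bool}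
  {root : F.ConnectedComponent → V} {vert : F.ConnectedComponent → Fin 3 → V}

/-- The vertex with a given label, for a choice of frames of all components of `F`. -/
def frameMap (root : F.ConnectedComponent → V) (vert : F.ConnectedComponent → Fin 3 → V) :
    BaseVerts unit → V :=
  Sum.elim root fun u => vert u.1.1 u.1.2

theorem IsFrame.mem {c : F.ConnectedComponent} {b : Bool} {r : V} {u : Fin 3 → V}
    (h : IsFrame T F c b r u) {i : Fin 3} (hi : b = true ∨ i = 0) : u i ∈ c.supp := by
  have hcenter := c.mem_supp_of_adj_mem_supp h.root_mem h.adj_root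
  by_cases hi0 : i = 0
  · rwa [hi0]
  · exact c.mem_supp_of_adj_mem_supp hcenter (h.adj (hi.resolve_right hi0) i hi0)

theorem connectedComponentMk_frameMap (h : ∀ c, IsFrame T F c (unit c) (root c) (vert c))
    (v : BaseVerts unit) : F.connectedComponentMk (frameMap root vert v) = baseIndex v := by
  rcases v with c | u
  exacts [(h c).root_mem, (h u.1.1).mem u.2]

theorem frameMap_bijective (h : ∀ c, IsFrame T F c (unit c) (root c) (vert c)) :
    Function.Bijective (frameMap (unit := unit) root vert) := by
  refine ⟨fun v w hvw => ?_, fun v => ?_⟩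
  · have hindex : baseIndex v = baseIndex w := by
      rw [← connectedComponentMk_frameMap h, hvw, connectedComponentMk_frameMap h]
    rcases v with c | u <;> rcases w with c' | u'
    · exact congrArg _ hindex
    · obtain rfl : c = u'.1.1 := hindex
      exact absurd hvw.symm ((h _).ne_root _ u'.2)
    · obtain rfl : u.1.1 = c' := hindex
      exact absurd hvw ((h _).ne_root _ u.2)
    · have hindex : u'.1.1 = u.1.1 := hindex.symm
      have hvw : vert u.1.1 u.1.2 = vert u'.1.1 u'.1.2 := hvw
      rw [hindex] at hvw
      exact congrArg _ (unitVerts_ext hindex.symm ((h u.1.1).injOn u.2 (hindex ▸ u'.2) hvw))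
  · obtain hv | ⟨i, hi, hv⟩ := (h _).eq_or_exists v rfl
    exacts [⟨.inl _, hv.symm⟩, ⟨.inr ⟨(_, i), hi⟩, hv.symm⟩]

theorem isHub_root_of_isAppended (h : ∀ c, IsFrame T F c (unit c) (root c) (vert c))
    {c : F.ConnectedComponent}
    (hc : IsAppended (T.comap (frameMap (unit := unit) root vert)) c) : IsHub T F (root c) := by
  obtain ⟨u, hne, hadj⟩ := hc
  exact ((h u.1.1).outer u.1.2 u.2 _ hadj ((h c).root_mem.trans_ne hne.symm)).2

theorem isUnitSystem_comap_frameMap (hle : F ≤ T)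
    (h : ∀ c, IsFrame T F c (unit c) (root c) (vert c)) :
    IsUnitSystem (T.comap (frameMap (unit := unit) root vert)) where
  baseTree_bot_le := by
    refine baseTree_le (fun _ _ hf => hf.elim) (fun u hu => hle ?_) (fun u w huw hu hw => hle ?_)
    · change F.Adj (root u.1.1) (vert u.1.1 u.1.2)
      rw [hu]
      exact (h u.1.1).adj_root
    · change F.Adj (vert u.1.1 u.1.2) (vert w.1.1 w.1.2)
      rw [huw, hu]
      exact (h w.1.1).adj (w.2.resolve_right hw) _ hw
  eq_inl {u v} hadj hne := by
    have hhub := ((h u.1.1).outer u.1.2 u.2 _ hadj (connectedComponentMk_frameMap h v ▸ hne)).2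
    exact (frameMap_bijective h).injective
      ((h _).hub _ (connectedComponentMk_frameMap h v) hhub).2.1
  isPort {u x} hadj hne := ((h u.1.1).outer u.1.2 u.2 _ hadj ((h x).root_mem.trans_ne hne.symm)).1
  unit_eq_false {x} hx := ((h x).hub _ (h x).root_mem (isHub_root_of_isAppended h hx)).1
  eq_inr {u x v} hadj hne hadj' hne' := by
    have hroot : F.connectedComponentMk (root x) = x := (h x).root_mem
    have hhub := isHub_root_of_isAppended h ⟨u, hne, hadj⟩
    refine (frameMap_bijective h).injective (hhub.2.2.unique ⟨hadj', ?_⟩ ⟨hadj.symm, ?_⟩)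
    · rwa [connectedComponentMk_frameMap h, hroot]
    · rwa [connectedComponentMk_frameMap h, hroot]
  baseIndex_eq {x v} hx hadj := by
    rw [← connectedComponentMk_frameMap h v]
    exact ((h x).hub _ (h x).root_mem (isHub_root_of_isAppended h hx)).2.2 _ hadj

end frameMap

theorem isNTDSet_preimage {W : Type*} {G : SimpleGraph V} {H : SimpleGraph W} (φ : G ≃g H)
    {S : Set W} (hS : IsNTDSet H S) : IsNTDSet G (φ ⁻¹' S) := by
  have hnbhd : ∀ v, φ v ∈ openNbhd H S → v ∈ openNbhd G (φ ⁻¹' S) := fun v ⟨s, hs, hsv⟩ => by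
    obtain ⟨s, rfl⟩ := φ.surjective s
    exact ⟨s, hs, φ.map_adj_iff.1 hsv⟩
  refine ⟨fun v hv => hnbhd v (hS.1 (φ v) hv), fun v ⟨s, hs, hsv⟩ => ?_⟩
  obtain ⟨w, hw, hvw⟩ := hS.2 (φ v) ⟨φ s, hs, φ.map_adj_iff.2 hsv⟩
  obtain ⟨w, rfl⟩ := φ.surjective w
  exact ⟨w, hnbhd w hw, φ.map_adj_iff.1 hvw⟩

theorem ntdNum_le_ncard {W : Type*} {G : SimpleGraph V} {H : SimpleGraph W} (φ : G ≃g H)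
    {S : Set W} (hS : IsNTDSet H S) : ntdNum G ≤ S.ncard := by
  refine Nat.sInf_le ⟨φ ⁻¹' S, isNTDSet_preimage φ hS, ?_⟩
  exact Set.ncard_preimage_of_injective_subset_range φ.injective fun _ _ => φ.surjective _

theorem MemFamily.congr {W : Type*} {G : SimpleGraph V} {H : SimpleGraph W} (φ : G ≃g H)
    (hH : MemFamily H) : MemFamily G := by
  obtain ⟨α, T0, unit, k, hT0, hleaf, hdist, ⟨ψ⟩⟩ := hH
  exact ⟨α, T0, unit, k, hT0, hleaf, hdist, ⟨φ.trans ψ⟩⟩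

theorem IsExtremalPair.memFamily {V : Type} [Finite V] {T F : SimpleGraph V}
    (h : IsExtremalPair T F) : MemFamily T := by
  choose unit root vert hframe using h.exists_isFrame
  let φ := Iso.comap (.ofBijective _ (frameMap_bijective hframe)) T
  exact .congr φ.symm
    ((isUnitSystem_comap_frameMap h.le hframe).memFamily (φ.isTree_iff.2 h.isTree))

end NTDTree

/-- A tree `T` of order `n ≥ 4` with `2·γnt(T) = n` belongs to the family `𝒯`: it is
isomorphic to a tree built from some tree `T0` via a base tree `T1 = baseTree T0 unit` by
appending, to each vertex `v` of `T1` with `k v > 0`, `k v` copies of `P2`, where the set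
`L1 = {v | k v > 0}` consists of leaves of `T1` and forms a 2-packing of `T1`. -/
theorem stmt18 {V : Type*} [Fintype V] (T : SimpleGraph V) (hT : T.IsTree)
    (hn : 4 ≤ Fintype.card V) (h : 2 * ntdNum T = Fintype.card V) :
    ∃ (α : Type) (T0 : SimpleGraph α) (unit : α → Bool) (k : BaseVerts unit → ℕ),
      T0.IsTree ∧
      (∀ v : BaseVerts unit, 0 < k v → IsLeafVertex (baseTree T0 unit) v) ∧
      (∀ u v : BaseVerts unit, 0 < k u → 0 < k v → u ≠ v →
        3 ≤ (baseTree T0 unit).dist u v) ∧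
      Nonempty (T ≃g fullTree T0 unit k) := by
  let φ : T ≃g T.overFin rfl := T.overFinIso rfl
  have htree := φ.isTree_iff.1 hT
  have hcard : Nat.card (Fin (Fintype.card V)) = 2 * ntdNum T := by rw [Nat.card_fin, h]
  obtain ⟨F, hle, hodd⟩ := NTDTree.exists_le_forall_odd_ncard_neighborSet htree.connected
    (hcard ▸ even_two_mul _)
  have hpair : NTDTree.IsExtremalPair (T.overFin rfl) F :=
    ⟨htree, fun S hS => hcard ▸ Nat.mul_le_mul_left 2 (NTDTree.ntdNum_le_ncard φ hS), hle, hodd⟩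
  exact hpair.memFamily.congr φ
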